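/- In the setting where W is uniform on {−1,1}^d, the sample X ∈ {−1,1}^d is obtained by passing each coordinate of W through BSC((1−δ)/2), and the processor sends a b-bit quantization of X over T uses of a DMC P_{V|U} with capacity C, let the distortion be the average bit error ℓ(w,ŵ) = (1/d) Σ_{j=1}^d 1{w_j ≠ ŵ_j} and R_B the corresponding Bayes risk. Then R_B ≥ h₂^{−1}( 1 − (1/d) min{ d(1 − h₂((1−δ)/2)) η_T, δ² b η_T, δ² C T } ), provided the argument of h₂^{−1} lies in [0,1]. Moreover, achieving R_B ≤ p requires the quantization rate to satisfy b/d ≥ (1 − h₂(p)) / (δ² η_T), where η_T = 1 − (1 − η(P_{V|U}))^T. -/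

import Mathlib

open MeasureTheory ProbabilityTheory Real

attribute [local instance] Classical.propDecidable
open scoped ENNReal NNReal

noncomputable section
namespace DecEst

variable {Ω α β γ : Type*}


/-- Kullback–Leibler divergence in bits. -/
def klDiv2 [MeasurableSpace α] (ν μ' : Measure α) : ℝ≥0∞ :=
  if ν ≪ μ' ∧ Integrable (fun x => Real.logb 2 ((ν.rnDeriv μ' x).toReal)) ν then
    ENNReal.ofReal (∫ x, Real.logb 2 ((ν.rnDeriv μ' x).toReal) ∂ν)
  else ⊤

/-- Mutual information (in bits) of a joint distribution. -/
def miM [MeasurableSpace α] [MeasurableSpace β] (pp : Measure (α × β)) : ℝ≥0∞ :=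
  klDiv2 pp ((pp.map Prod.fst).prod (pp.map Prod.snd))

/-- Mutual information (in bits) between two random variables. -/
def mi [MeasurableSpace Ω] [MeasurableSpace α] [MeasurableSpace β]
    (μ : Measure Ω) (X : Ω → α) (Y : Ω → β) : ℝ :=
  (miM (μ.map fun ω => (X ω, Y ω))).toReal

/-- SDPI constant of a channel `K` at input distribution `π`. -/
def eta [MeasurableSpace α] [MeasurableSpace β] (pp : Measure α) (K : Kernel α β) : ℝ≥0∞ :=
  ⨆ (ν : Measure α) (_ : IsProbabilityMeasure ν) (_ : ν ≠ pp),
    klDiv2 (ν.bind K) (pp.bind K) / klDiv2 ν pp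

/-- SDPI constant of a channel `K` (supremum over input distributions). -/
def etaMax [MeasurableSpace α] [MeasurableSpace β] (K : Kernel α β) : ℝ≥0∞ :=
  ⨆ (pp : Measure α) (_ : IsProbabilityMeasure pp), eta pp K

/-- Shannon capacity (in bits) of a channel. -/
def capacity [MeasurableSpace α] [MeasurableSpace β] (K : Kernel α β) [IsSFiniteKernel K] : ℝ :=
  ⨆ pp : ProbabilityMeasure α, (miM ((pp : Measure α) ⊗ₘ K)).toReal

/-- `T`-fold memoryless product of a channel. -/
def kernelPi [MeasurableSpace α] [MeasurableSpace β] [Countable α] [MeasurableSingletonClass α]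
    (T : ℕ) (K : Kernel α β) : Kernel (Fin T → α) (Fin T → β) where
  toFun u := Measure.pi fun t => K (u t)
  measurable' := measurable_of_countable _

/-- Bernoulli distribution on `Bool`. -/
def bern (p : ℝ) : Measure Bool :=
  (ENNReal.ofReal p) • Measure.dirac true + (ENNReal.ofReal (1 - p)) • Measure.dirac false

/-- Binary symmetric channel with crossover probability `ε`. -/
def bsc (ε : ℝ) : Kernel Bool Bool where
  toFun b := (ENNReal.ofReal ε) • Measure.dirac (!b) + (ENNReal.ofReal (1 - ε)) • Measure.dirac b
  measurable' := measurable_of_countable _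

/-- Binary entropy function (in bits). -/
def binEnt (p : ℝ) : ℝ := (Real.negMulLog p + Real.negMulLog (1 - p)) / Real.log 2

/-- Inverse of the binary entropy function on `[0, 1/2]`. -/
def binEntInv (y : ℝ) : ℝ := sSup {p : ℝ | p ∈ Set.Icc 0 (1 / 2) ∧ binEnt p ≤ y}


/-!
Write `Y` for the quantized sample and `V` for the channel outputs, and measure information in nats.
Fano's inequality, applied bit by bit and averaged by concavity of the binary entropy function `h`,
gives `d (log 2 - h(e)) ≤ I(W; V)` where `e` is the average bit error, so it remains to bound
`I(W; V)` from above in three ways.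

* If `η` is the SDPI constant of the channel, a single use contracts information by `η`
  conditionally on the earlier outputs. Since `W → Y → Vᵗ` is Markov, this reads
  `I(W; Vᵗ⁺¹) ≤ (1 - η) I(W; Vᵗ) + η I(W; Y)`, which iterates to
  `I(W; Vᵀ) ≤ (1 - (1 - η)ᵀ) I(W; Y)`; and `I(W; Y) ≤ I(W; X) = d (log 2 - h((1 - δ) / 2))`.
* `W` is also the output of the binary symmetric channel fed with `X`. For one bit,
  `log 2 - h((1 - x) / 2)` is a power series in `x²` with nonnegative coefficients and no constant
  term, so replacing `x` by `δ x` costs a factor `δ²`; the chain rule extends this to `d` bits.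
  Hence `I(W; C) ≤ δ² I(X; C)` whenever `W → X → C` is Markov. Taking `C = Y` and using
  `I(X; Y) ≤ b log 2` bounds `I(W; Y)` by `δ² b log 2`.
* Taking `C = Vᵀ` instead, each channel use adds at most the capacity to `I(X; Vᵀ)`.
-/

section FiniteValued

variable [MeasurableSpace Ω] {μ : Measure Ω}

lemma real_cond_apply {s : Set Ω} (hs : MeasurableSet s) (t : Set Ω) :
    μ[|s].real t = (μ.real s)⁻¹ * μ.real (s ∩ t) := by
  rw [measureReal_def, cond_apply hs, ENNReal.toReal_mul, ENNReal.toReal_inv, measureReal_def,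
    measureReal_def]

variable [IsFiniteMeasure μ]

lemma sum_real_preimage_mul_le [Fintype γ] {C : Ω → γ} {f g : γ → ℝ}
    (h : ∀ c, IsProbabilityMeasure μ[|C ⁻¹' {c}] → f c ≤ g c) :
    ∑ c, μ.real (C ⁻¹' {c}) * f c ≤ ∑ c, μ.real (C ⁻¹' {c}) * g c := by
  refine Finset.sum_le_sum fun c _ => ?_
  by_cases hc : μ (C ⁻¹' {c}) = 0
  · simp [measureReal_def, hc]
  · exact mul_le_mul_of_nonneg_left (h c (cond_isProbabilityMeasure hc)) measureReal_nonneg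

variable [MeasurableSpace α] [MeasurableSingletonClass α] {X : Ω → α}

lemma integrable_comp_of_finite [Finite α] (hX : Measurable X) (g : α → ℝ) :
    Integrable (fun ω => g (X ω)) μ :=
  (Integrable.of_finite : Integrable g (μ.map X)).comp_measurable hX

lemma integral_comp_eq_sum [Fintype α] (hX : Measurable X) (g : α → ℝ) :
    ∫ ω, g (X ω) ∂μ = ∑ a, μ.real (X ⁻¹' {a}) * g a := by
  rw [← integral_map hX.aemeasurable (f := g) .of_discrete, integral_fintype .of_finite]
  simp only [map_measureReal_apply hX (measurableSet_singleton _), smul_eq_mul]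

lemma sum_real_preimage_inter [Fintype α] (hX : Measurable X) (s : Set Ω) :
    ∑ a, μ.real (X ⁻¹' {a} ∩ s) = μ.real s := by
  have hmeas (a : α) : MeasurableSet (X ⁻¹' {a}) := hX (measurableSet_singleton a)
  simp only [← measureReal_restrict_apply (hmeas _)]
  rw [sum_measureReal_preimage_singleton _ fun a _ => hmeas a]
  simp

lemma sum_real_preimage_eq_one {μ : Measure Ω} [IsProbabilityMeasure μ] [Fintype α]
    (hX : Measurable X) : ∑ a, μ.real (X ⁻¹' {a}) = 1 := by
  simpa using sum_real_preimage_inter (μ := μ) hX Set.univ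

lemma ae_real_preimage_ne_zero [Countable α] (hX : Measurable X) :
    ∀ᵐ ω ∂μ, μ.real (X ⁻¹' {X ω}) ≠ 0 := by
  have hlaw : ∀ᵐ a ∂μ.map X, (μ.map X) {a} ≠ 0 := by
    refine ae_iff.2 ((measure_null_iff_singleton (Set.to_countable _)).2 fun a ha => ?_)
    simpa using ha
  filter_upwards [ae_of_ae_map hX.aemeasurable hlaw] with ω hω
  rwa [Measure.map_apply hX (measurableSet_singleton _), ← measureReal_ne_zero_iff] at hω

lemma sum_real_preimage_mul_integral_cond [MeasurableSpace γ] [Fintype γ]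
    [MeasurableSingletonClass γ] {C : Ω → γ} (hC : Measurable C) {f : Ω → ℝ}
    (hf : Integrable f μ) :
    ∑ c, μ.real (C ⁻¹' {c}) * ∫ ω, f ω ∂μ[|C ⁻¹' {c}] = ∫ ω, f ω ∂μ := by
  conv_rhs => rw [← sum_meas_smul_cond_fiber hC μ]
  have hint (c : γ) : Integrable f (μ (C ⁻¹' {c}) • μ[|C ⁻¹' {c}]) := by
    refine hf.mono_measure ?_
    conv_rhs => rw [← sum_meas_smul_cond_fiber hC μ]
    exact Finset.single_le_sum (f := fun c => μ (C ⁻¹' {c}) • μ[|C ⁻¹' {c}])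
      (fun _ _ => Measure.zero_le _) (Finset.mem_univ c)
  rw [integral_finsetSum_measure fun c _ => hint c]
  simp only [integral_smul_measure, measureReal_def, smul_eq_mul]

end FiniteValued

section Entropy

/-- Shannon entropy in nats. Writing it as the mean of `-log P(X = X ω)` makes it depend on `X`
only through the partition of `Ω` that `X` generates. -/
def entropy [MeasurableSpace Ω] (μ : Measure Ω) (X : Ω → α) : ℝ :=
  ∫ ω, -log (μ.real (X ⁻¹' {X ω})) ∂μ

/-- Conditional entropy `H(X | C)` in nats. -/
def condEntropy [MeasurableSpace Ω] (μ : Measure Ω) (X : Ω → α) (C : Ω → γ) : ℝ :=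
  entropy μ (fun ω => (X ω, C ω)) - entropy μ C

/-- Mutual information `I(X; Y)` in nats. -/
def mutualInfo [MeasurableSpace Ω] (μ : Measure Ω) (X : Ω → α) (Y : Ω → β) : ℝ :=
  entropy μ X - condEntropy μ X Y

/-- Conditional mutual information `I(X; Y | C)` in nats. -/
def condMutualInfo [MeasurableSpace Ω] (μ : Measure Ω) (X : Ω → α) (Y : Ω → β) (C : Ω → γ) : ℝ :=
  condEntropy μ X C - condEntropy μ X fun ω => (Y ω, C ω)

variable [MeasurableSpace Ω] {μ : Measure Ω} {X : Ω → α} {Y : Ω → β} {C : Ω → γ}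

lemma entropy_congr (h : ∀ ω ω', X ω = X ω' ↔ Y ω = Y ω') : entropy μ X = entropy μ Y := by
  simp only [entropy, Set.preimage, Set.mem_singleton_iff, h]

lemma condEntropy_congr_left (h : ∀ ω ω', C ω = C ω' → (X ω = X ω' ↔ Y ω = Y ω')) :
    condEntropy μ X C = condEntropy μ Y C := by
  rw [condEntropy, condEntropy, entropy_congr fun ω ω' => ?_]
  simp only [Prod.mk.injEq]
  exact and_congr_left (h ω ω')

lemma condEntropy_congr_right (h : ∀ ω ω', Y ω = Y ω' ↔ C ω = C ω') :
    condEntropy μ X Y = condEntropy μ X C := by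
  rw [condEntropy, condEntropy, entropy_congr h, entropy_congr fun ω ω' => ?_]
  simp only [Prod.mk.injEq, h]

lemma condEntropy_prodMk (X : Ω → α) (Y : Ω → β) (C : Ω → γ) :
    condEntropy μ (fun ω => (X ω, Y ω)) C =
      condEntropy μ Y C + condEntropy μ X fun ω => (Y ω, C ω) := by
  have hassoc : entropy μ (fun ω => ((X ω, Y ω), C ω)) = entropy μ fun ω => (X ω, Y ω, C ω) :=
    entropy_congr fun ω ω' => by simp only [Prod.mk.injEq, and_assoc]
  simp only [condEntropy, hassoc]
  ring

lemma mutualInfo_comm (X : Ω → α) (Y : Ω → β) : mutualInfo μ X Y = mutualInfo μ Y X := by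
  have hswap : entropy μ (fun ω => (X ω, Y ω)) = entropy μ fun ω => (Y ω, X ω) :=
    entropy_congr fun ω ω' => by simp only [Prod.mk.injEq, and_comm]
  simp only [mutualInfo, condEntropy, hswap]
  ring

lemma mutualInfo_prodMk_right (X : Ω → α) (Y : Ω → β) (C : Ω → γ) :
    mutualInfo μ X (fun ω => (Y ω, C ω)) = mutualInfo μ X C + condMutualInfo μ X Y C := by
  simp only [mutualInfo, condMutualInfo]
  ring

lemma condMutualInfo_comm (X : Ω → α) (Y : Ω → β) (C : Ω → γ) :
    condMutualInfo μ X Y C = condMutualInfo μ Y X C := by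
  have hswap : condEntropy μ (fun ω => (X ω, Y ω)) C = condEntropy μ (fun ω => (Y ω, X ω)) C :=
    condEntropy_congr_left fun ω ω' _ => by simp only [Prod.mk.injEq, and_comm]
  rw [condEntropy_prodMk, condEntropy_prodMk] at hswap
  simp only [condMutualInfo]
  linarith

variable [IsFiniteMeasure μ]
  [MeasurableSpace α] [MeasurableSingletonClass α]

lemma integrable_log_real_preimage [Finite α] (hX : Measurable X) :
    Integrable (fun ω => log (μ.real (X ⁻¹' {X ω}))) μ :=
  integrable_comp_of_finite hX fun a => log (μ.real (X ⁻¹' {a}))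

lemma entropy_eq_sum [Fintype α] (hX : Measurable X) :
    entropy μ X = ∑ a, negMulLog (μ.real (X ⁻¹' {a})) := by
  rw [entropy, integral_comp_eq_sum hX fun a => -log (μ.real (X ⁻¹' {a}))]
  simp only [negMulLog, neg_mul, mul_neg]

lemma condEntropy_eq_sum [Finite α] [MeasurableSpace γ] [Fintype γ] [MeasurableSingletonClass γ]
    (hX : Measurable X) (hC : Measurable C) :
    condEntropy μ X C = ∑ c, μ.real (C ⁻¹' {c}) * entropy μ[|C ⁻¹' {c}] X := by
  have hXC : Measurable fun ω => (X ω, C ω) := hX.prodMk hC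
  have hneg : Integrable (fun ω => -log (μ.real ((fun ω => (X ω, C ω)) ⁻¹' {(X ω, C ω)}))) μ :=
    (integrable_log_real_preimage hXC).neg
  calc condEntropy μ X C
      = ∫ ω, (-log (μ.real ((fun ω => (X ω, C ω)) ⁻¹' {(X ω, C ω)})) +
          log (μ.real (C ⁻¹' {C ω}))) ∂μ := by
        rw [integral_add hneg (integrable_log_real_preimage hC), condEntropy, entropy, entropy,
          integral_neg (fun ω => log (μ.real (C ⁻¹' {C ω}))), sub_neg_eq_add]
    _ = ∑ c, μ.real (C ⁻¹' {c}) * ∫ ω, (-log (μ.real ((fun ω => (X ω, C ω)) ⁻¹' {(X ω, C ω)})) +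
          log (μ.real (C ⁻¹' {C ω}))) ∂μ[|C ⁻¹' {c}] :=
        (sum_real_preimage_mul_integral_cond hC (hneg.add (integrable_log_real_preimage hC))).symm
    _ = _ := by
        refine Finset.sum_congr rfl fun c _ => congrArg _ (integral_congr_ae ?_)
        have hmeas : MeasurableSet (C ⁻¹' {c}) := hC (measurableSet_singleton c)
        filter_upwards [ae_cond_mem hmeas, cond_absolutelyContinuous (ae_real_preimage_ne_zero hXC),
          cond_absolutelyContinuous (ae_real_preimage_ne_zero hC)] with ω hω hXC0 hC0
        obtain rfl : C ω = c := hω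
        have hinter : (fun ω => (X ω, C ω)) ⁻¹' {(X ω, C ω)} =
            C ⁻¹' {C ω} ∩ X ⁻¹' {X ω} := by
          ext; simp [and_comm]
        rw [hinter] at hXC0 ⊢
        rw [real_cond_apply hmeas, log_mul (inv_ne_zero hC0) hXC0, log_inv]
        ring

lemma entropy_le_log_card (μ : Measure Ω) [IsProbabilityMeasure μ] [Fintype α]
    (hX : Measurable X) : entropy μ X ≤ log (Fintype.card α) := by
  have : Nonempty α := μ.nonempty_of_neZero.map X
  have hcard : (0 : ℝ) < Fintype.card α := mod_cast Fintype.card_pos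
  have hjensen := concaveOn_negMulLog.le_map_sum (t := Finset.univ)
    (w := fun _ : α => (Fintype.card α : ℝ)⁻¹) (p := fun a => μ.real (X ⁻¹' {a}))
    (fun _ _ => by positivity) (by simp [hcard.ne']) fun _ _ => measureReal_nonneg
  simp only [smul_eq_mul, ← Finset.mul_sum, sum_real_preimage_eq_one hX, ← entropy_eq_sum hX,
    mul_one] at hjensen
  rw [negMulLog, log_inv, neg_mul_neg] at hjensen
  exact le_of_mul_le_mul_left hjensen (inv_pos.2 hcard)

end Entropy

section Divergence

open InformationTheory

lemma rnDeriv_mul_singleton [MeasurableSpace α] [MeasurableSingletonClass α] {ν m : Measure α}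
    [ν.HaveLebesgueDecomposition m] [SFinite m] (hac : ν ≪ m) (a : α) :
    ν.rnDeriv m a * m {a} = ν {a} := by
  rw [← lintegral_singleton, Measure.setLIntegral_rnDeriv hac]

variable [MeasurableSpace Ω] {μ : Measure Ω} [IsProbabilityMeasure μ]
  [MeasurableSpace α] [MeasurableSingletonClass α] {X : Ω → α}
  [MeasurableSpace β] [Finite β] [MeasurableSingletonClass β] {Y : Ω → β}

lemma toReal_klDiv_map_left [Finite α] (hX : Measurable X) {m : Measure α}
    [IsProbabilityMeasure m] (hac : μ.map X ≪ m) :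
    (klDiv (μ.map X) m).toReal = -entropy μ X - ∫ ω, log (m.real {X ω}) ∂μ := by
  have : IsProbabilityMeasure (μ.map X) := Measure.isProbabilityMeasure_map hX.aemeasurable
  rw [toReal_klDiv_of_measure_eq hac (by simp), integral_map hX.aemeasurable .of_discrete, entropy,
    integral_neg, neg_neg, ← integral_sub (integrable_log_real_preimage hX)
      (integrable_comp_of_finite hX fun a => log (m.real {a}))]
  refine integral_congr_ae ?_
  filter_upwards [ae_real_preimage_ne_zero hX] with ω hω
  have hderiv : ((μ.map X).rnDeriv m (X ω)).toReal * m.real {X ω} = μ.real (X ⁻¹' {X ω}) := by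
    rw [measureReal_def, ← ENNReal.toReal_mul, rnDeriv_mul_singleton hac, ← measureReal_def,
      map_measureReal_apply hX (measurableSet_singleton _)]
  rw [← hderiv] at hω ⊢
  rw [log_mul (left_ne_zero_of_mul hω) (right_ne_zero_of_mul hω), llr]
  ring

lemma klDiv_ne_top_of_finite [Finite α] {ν m : Measure α} [IsFiniteMeasure ν]
    (hac : ν ≪ m) : klDiv ν m ≠ ⊤ :=
  klDiv_ne_top hac .of_finite

lemma map_prodMk_absolutelyContinuous [Finite α] (hX : Measurable X) (hY : Measurable Y) :
    μ.map (fun ω => (X ω, Y ω)) ≪ (μ.map X).prod (μ.map Y) := by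
  intro s hs
  rw [measure_null_iff_singleton s.to_countable] at hs ⊢
  rintro ⟨a, b⟩ hab
  have hprod : μ (X ⁻¹' {a}) = 0 ∨ μ (Y ⁻¹' {b}) = 0 := by
    simpa [← Set.singleton_prod_singleton, Measure.prod_prod,
      Measure.map_apply hX, Measure.map_apply hY] using hs _ hab
  rw [Measure.map_apply (hX.prodMk hY) (measurableSet_singleton _)]
  rcases hprod with ha | hb
  · exact measure_mono_null (fun ω hω => congrArg Prod.fst hω) ha
  · exact measure_mono_null (fun ω hω => congrArg Prod.snd hω) hb

lemma mutualInfo_eq_toReal_klDiv [Finite α] (hX : Measurable X) (hY : Measurable Y) :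
    mutualInfo μ X Y =
      (klDiv (μ.map fun ω => (X ω, Y ω)) ((μ.map X).prod (μ.map Y))).toReal := by
  have : IsProbabilityMeasure (μ.map X) := Measure.isProbabilityMeasure_map hX.aemeasurable
  have : IsProbabilityMeasure (μ.map Y) := Measure.isProbabilityMeasure_map hY.aemeasurable
  have hlog : ∀ᵐ ω ∂μ, log (((μ.map X).prod (μ.map Y)).real {(X ω, Y ω)}) =
      log (μ.real (X ⁻¹' {X ω})) + log (μ.real (Y ⁻¹' {Y ω})) := by
    filter_upwards [ae_real_preimage_ne_zero hX, ae_real_preimage_ne_zero hY] with ω hXω hYω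
    rw [← Set.singleton_prod_singleton, measureReal_prod_prod,
      map_measureReal_apply hX (measurableSet_singleton _),
      map_measureReal_apply hY (measurableSet_singleton _), log_mul hXω hYω]
  rw [toReal_klDiv_map_left (hX.prodMk hY) (map_prodMk_absolutelyContinuous hX hY),
    integral_congr_ae hlog, integral_add (integrable_log_real_preimage hX)
      (integrable_log_real_preimage hY)]
  simp only [mutualInfo, condEntropy, entropy, integral_neg]
  ring

lemma mutualInfo_eq_sum_klDiv [Fintype α] (hX : Measurable X) (hY : Measurable Y) :
    mutualInfo μ X Y =
      ∑ a, μ.real (X ⁻¹' {a}) * (klDiv (μ[|X ⁻¹' {a}].map Y) (μ.map Y)).toReal := by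
  have : IsProbabilityMeasure (μ.map Y) := Measure.isProbabilityMeasure_map hY.aemeasurable
  have hterm (a : α) :
      μ.real (X ⁻¹' {a}) * (klDiv (μ[|X ⁻¹' {a}].map Y) (μ.map Y)).toReal =
        μ.real (X ⁻¹' {a}) * (-entropy μ[|X ⁻¹' {a}] Y) -
          μ.real (X ⁻¹' {a}) * ∫ ω, log (μ.real (Y ⁻¹' {Y ω})) ∂μ[|X ⁻¹' {a}] := by
    by_cases ha : μ (X ⁻¹' {a}) = 0
    · simp [measureReal_def, ha]
    have : IsProbabilityMeasure μ[|X ⁻¹' {a}] := cond_isProbabilityMeasure ha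
    rw [toReal_klDiv_map_left hY (cond_absolutelyContinuous.map hY), mul_sub]
    simp only [map_measureReal_apply hY (measurableSet_singleton _)]
  simp only [hterm, Finset.sum_sub_distrib, mul_neg, Finset.sum_neg_distrib]
  rw [sum_real_preimage_mul_integral_cond hX (integrable_log_real_preimage hY),
    ← condEntropy_eq_sum hY hX, mutualInfo_comm, mutualInfo, entropy, integral_neg]
  ring

lemma mutualInfo_nonneg [Finite α] (hX : Measurable X) (hY : Measurable Y) :
    0 ≤ mutualInfo μ X Y := by
  cases nonempty_fintype α
  rw [mutualInfo_eq_sum_klDiv hX hY]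
  positivity

lemma condEntropy_nonneg [Finite α] (hX : Measurable X) (hY : Measurable Y) :
    0 ≤ condEntropy μ X Y := by
  cases nonempty_fintype β
  rw [condEntropy_eq_sum hX hY]
  refine Finset.sum_nonneg fun c _ => mul_nonneg measureReal_nonneg (integral_nonneg fun ω => ?_)
  exact neg_nonneg.2 (log_nonpos measureReal_nonneg measureReal_le_one)

lemma mutualInfo_le_log_card [Fintype α] (hX : Measurable X) (hY : Measurable Y) :
    mutualInfo μ X Y ≤ log (Fintype.card α) :=
  (sub_le_self _ (condEntropy_nonneg hX hY)).trans (entropy_le_log_card μ hX)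

variable [Finite α] [MeasurableSpace γ] [MeasurableSingletonClass γ] {C : Ω → γ}

lemma condMutualInfo_eq_sum [Fintype γ] (hX : Measurable X) (hY : Measurable Y)
    (hC : Measurable C) :
    condMutualInfo μ X Y C =
      ∑ c, μ.real (C ⁻¹' {c}) * mutualInfo μ[|C ⁻¹' {c}] X Y := by
  have hchain := condEntropy_prodMk (μ := μ) X Y C
  rw [condMutualInfo, ← sub_eq_iff_eq_add'.2 hchain, condEntropy_eq_sum (hX.prodMk hY) hC,
    condEntropy_eq_sum hX hC, condEntropy_eq_sum hY hC]
  simp only [mutualInfo, condEntropy, mul_sub, Finset.sum_sub_distrib]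

lemma condMutualInfo_nonneg [Finite γ] (hX : Measurable X) (hY : Measurable Y)
    (hC : Measurable C) : 0 ≤ condMutualInfo μ X Y C := by
  cases nonempty_fintype γ
  rw [condMutualInfo_eq_sum hX hY hC]
  simpa using sum_real_preimage_mul_le (μ := μ) (C := C) (f := 0) fun c _ =>
    mutualInfo_nonneg (μ := μ[|C ⁻¹' {c}]) hX hY

lemma condEntropy_le_entropy (hX : Measurable X) (hY : Measurable Y) :
    condEntropy μ X Y ≤ entropy μ X :=
  sub_nonneg.1 (mutualInfo_nonneg hX hY)

lemma condEntropy_le_condEntropy_comp [Finite γ] (hX : Measurable X) (hC : Measurable C)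
    (r : γ → β) : condEntropy μ X C ≤ condEntropy μ X fun ω => r (C ω) := by
  have hrC : Measurable fun ω => r (C ω) := .comp .of_discrete hC
  have hpair : condEntropy μ X (fun ω => (C ω, r (C ω))) = condEntropy μ X C :=
    condEntropy_congr_right fun ω ω' => by grind
  have hnonneg := condMutualInfo_nonneg (μ := μ) hX hC hrC
  rw [condMutualInfo, hpair] at hnonneg
  exact sub_nonneg.1 hnonneg

end Divergence

section Contraction

open InformationTheory

lemma log_two_pos : 0 < log 2 := log_pos one_lt_two

variable [MeasurableSpace α] [MeasurableSpace β]

lemma klDiv2_eq_klDiv_div (ν m : Measure α) [IsProbabilityMeasure ν] [IsProbabilityMeasure m] :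
    klDiv2 ν m = klDiv ν m / ENNReal.ofReal (log 2) := by
  have hint : Integrable (fun x => logb 2 (ν.rnDeriv m x).toReal) ν ↔ Integrable (llr ν m) ν := by
    simp only [logb, div_eq_mul_inv, integrable_mul_const_iff (inv_ne_zero log_two_pos.ne').isUnit]
    rfl
  rw [klDiv2, klDiv_def, hint]
  split_ifs
  · simp only [probReal_univ, add_sub_cancel_right]
    rw [← ENNReal.ofReal_div_of_pos log_two_pos, ← integral_div]
    rfl
  · rw [ENNReal.top_div_of_ne_top ENNReal.ofReal_ne_top]

variable (K : Kernel α β) [IsMarkovKernel K]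

lemma klDiv2_bind_div_klDiv2 (ν m : Measure α) [IsProbabilityMeasure ν] [IsProbabilityMeasure m] :
    klDiv2 (ν.bind K) (m.bind K) / klDiv2 ν m = klDiv (ν.bind K) (m.bind K) / klDiv ν m := by
  rw [klDiv2_eq_klDiv_div, klDiv2_eq_klDiv_div, div_eq_mul_inv (klDiv _ _),
    div_eq_mul_inv (klDiv ν m), ENNReal.mul_div_mul_right _ _ (by simp)
      (by simpa using log_two_pos)]

lemma etaMax_le_one : etaMax K ≤ 1 := by
  refine iSup₂_le fun m _ => iSup₂_le fun ν _ => iSup_le fun _ => ?_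
  rw [klDiv2_bind_div_klDiv2]
  exact ENNReal.div_le_of_le_mul ((klDiv_comp_right_le ν m K).trans_eq (one_mul _).symm)

lemma toReal_etaMax_le_one : (etaMax K).toReal ≤ 1 :=
  ENNReal.toReal_le_of_le_ofReal zero_le_one (by simpa using etaMax_le_one K)

lemma one_sub_pow_etaMax_nonneg (T : ℕ) : 0 ≤ 1 - (1 - (etaMax K).toReal) ^ T :=
  sub_nonneg.2 (pow_le_one₀ (sub_nonneg.2 (toReal_etaMax_le_one K))
    (sub_le_self 1 ENNReal.toReal_nonneg))

lemma toReal_klDiv_bind_le {ν m : Measure α} [IsProbabilityMeasure ν] [IsProbabilityMeasure m]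
    (hfin : klDiv ν m ≠ ⊤) :
    (klDiv (ν.bind K) (m.bind K)).toReal ≤ (etaMax K).toReal * (klDiv ν m).toReal := by
  rcases eq_or_ne ν m with rfl | hne
  · simp
  have hratio : klDiv (ν.bind K) (m.bind K) / klDiv ν m ≤ etaMax K := by
    rw [← klDiv2_bind_div_klDiv2]
    exact le_iSup₂_of_le m ‹_› (le_iSup₂_of_le ν ‹_› (le_iSup_of_le hne le_rfl))
  have hη : etaMax K ≠ ⊤ := ((etaMax_le_one K).trans_lt ENNReal.one_lt_top).ne
  rw [← ENNReal.toReal_mul]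
  refine ENNReal.toReal_mono (ENNReal.mul_ne_top hη hfin) ?_
  exact (ENNReal.div_le_iff_le_mul (.inl (klDiv_eq_zero_iff.not.2 hne)) (.inl hfin)).1 hratio

end Contraction

section Capacity

open InformationTheory

variable [MeasurableSpace Ω]
  [MeasurableSpace α] [Finite α] [MeasurableSingletonClass α]
  [MeasurableSpace β] [Finite β] [MeasurableSingletonClass β]

lemma toReal_miM_map {μ : Measure Ω} [IsProbabilityMeasure μ] {X : Ω → α} {Y : Ω → β}
    (hX : Measurable X) (hY : Measurable Y) :
    (miM (μ.map fun ω => (X ω, Y ω))).toReal = mutualInfo μ X Y / log 2 := by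
  have := Measure.isProbabilityMeasure_map (μ := μ) hX.aemeasurable
  have := Measure.isProbabilityMeasure_map (μ := μ) hY.aemeasurable
  have := Measure.isProbabilityMeasure_map (μ := μ) (hX.prodMk hY).aemeasurable
  have hfst : (μ.map fun ω => (X ω, Y ω)).map Prod.fst = μ.map X :=
    Measure.map_map measurable_fst (hX.prodMk hY)
  have hsnd : (μ.map fun ω => (X ω, Y ω)).map Prod.snd = μ.map Y :=
    Measure.map_map measurable_snd (hX.prodMk hY)
  rw [miM, hfst, hsnd, klDiv2_eq_klDiv_div, ENNReal.toReal_div,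
    ENNReal.toReal_ofReal log_two_pos.le, mutualInfo_eq_toReal_klDiv hX hY]

variable (K : Kernel α β) [IsMarkovKernel K]

lemma bddAbove_range_miM_compProd :
    BddAbove (Set.range fun m : ProbabilityMeasure α => (miM ((m : Measure α) ⊗ₘ K)).toReal) := by
  cases nonempty_fintype α
  refine ⟨log (Fintype.card α) / log 2, ?_⟩
  rintro _ ⟨m, rfl⟩
  have hlaw := toReal_miM_map (μ := (m : Measure α) ⊗ₘ K) measurable_fst measurable_snd
  rw [show (fun p : α × β => (p.1, p.2)) = id from rfl, Measure.map_id] at hlaw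
  simp only [hlaw]
  gcongr
  exact mutualInfo_le_log_card measurable_fst measurable_snd

lemma toReal_miM_compProd_le_capacity (m : Measure α) [hm : IsProbabilityMeasure m] :
    (miM (m ⊗ₘ K)).toReal ≤ capacity K :=
  le_ciSup (bddAbove_range_miM_compProd K) (⟨m, hm⟩ : ProbabilityMeasure α)

end Capacity

/-- `k c v` is the conditional probability of `V = v` given `C = c`: a channel from `C` to `V`. The
values of `k` at those `c` that `C` takes with probability zero are unconstrained. -/
def HasCondPMF [MeasurableSpace Ω] (μ : Measure Ω) (C : Ω → γ) (V : Ω → β) (k : γ → β → ℝ) : Prop :=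
  ∀ c v, μ.real (C ⁻¹' {c} ∩ V ⁻¹' {v}) = μ.real (C ⁻¹' {c}) * k c v

namespace HasCondPMF

variable [MeasurableSpace Ω] {μ : Measure Ω} {C : Ω → γ} {A : Ω → α} {V : Ω → β} {k : γ → β → ℝ}

lemma comp_equiv (h : HasCondPMF μ C V k) (e : β ≃ α) :
    HasCondPMF μ C (fun ω => e (V ω)) fun c a => k c (e.symm a) := by
  intro c a
  rw [← h c (e.symm a)]
  congr 2
  ext ω
  simp [e.eq_symm_apply]

lemma fst [IsFiniteMeasure μ] [MeasurableSpace β] [Fintype β] [MeasurableSingletonClass β]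
    (hV : Measurable V) {kA : γ → α → ℝ} {kV : γ → α → β → ℝ} (hsum : ∀ c a, ∑ v, kV c a v = 1)
    (h : HasCondPMF μ C (fun ω => (A ω, V ω)) fun c p => kA c p.1 * kV c p.1 p.2) :
    HasCondPMF μ C A kA := by
  intro c a
  rw [← sum_real_preimage_inter hV, ← mul_one (kA c a), ← hsum c a, Finset.mul_sum, Finset.mul_sum]
  refine Finset.sum_congr rfl fun v _ => ?_
  rw [← h c (a, v), ← Set.singleton_prod_singleton, Set.mk_preimage_prod, Set.inter_comm,
    Set.inter_assoc]

lemma snd [IsFiniteMeasure μ] [MeasurableSpace β] [Fintype β] [MeasurableSingletonClass β]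
    (hV : Measurable V) {kA : γ → α → ℝ} {kV : γ → α → β → ℝ} (hsum : ∀ c a, ∑ v, kV c a v = 1)
    (h : HasCondPMF μ C (fun ω => (A ω, V ω)) fun c p => kA c p.1 * kV c p.1 p.2) :
    HasCondPMF μ (fun ω => (C ω, A ω)) V fun p => kV p.1 p.2 := by
  rintro ⟨c, a⟩ v
  have hjoint := h c (a, v)
  rw [← Set.singleton_prod_singleton, Set.mk_preimage_prod] at hjoint ⊢
  rw [Set.inter_assoc, hjoint, fst hV hsum h, mul_assoc]

lemma cond [MeasurableSpace γ] [MeasurableSingletonClass γ] (hC : Measurable C)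
    {k : γ × α → β → ℝ} (h : HasCondPMF μ (fun ω => (C ω, A ω)) V k)
    (c : γ) :
    HasCondPMF μ[|C ⁻¹' {c}] A V fun a => k (c, a) := by
  intro a v
  have hjoint := h (c, a) v
  rw [← Set.singleton_prod_singleton, Set.mk_preimage_prod] at hjoint
  rw [real_cond_apply (hC (measurableSet_singleton c)),
    real_cond_apply (hC (measurableSet_singleton c)), ← Set.inter_assoc, hjoint, mul_assoc]

variable [MeasurableSpace γ] [Finite γ] [MeasurableSingletonClass γ]

lemma of_condDistrib [MeasurableSpace β] [StandardBorelSpace β] [Nonempty β]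
    [IsFiniteMeasure μ] (hC : Measurable C) (hV : Measurable V) {κ : γ → Measure β}
    (h : ∀ᵐ c ∂μ.map C, condDistrib V C μ c = κ c) :
    HasCondPMF μ C V fun c v => (κ c).real {v} := by
  intro c v
  have hjoint : (μ.map C) {c} * κ c {v} = μ (C ⁻¹' {c} ∩ V ⁻¹' {v}) := by
    rw [← Set.mk_preimage_prod, ← Measure.map_apply (hC.prodMk hV)
      ((measurableSet_singleton c).prod (measurableSet_singleton v)),
      ← compProd_map_condDistrib hV.aemeasurable,
      Measure.compProd_apply_prod (measurableSet_singleton c) (measurableSet_singleton v),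
      lintegral_singleton, mul_comm]
    by_cases hc : (μ.map C) {c} = 0
    · simp [hc]
    · rw [ae_iff_of_countable.1 h c hc]
  rw [measureReal_def, ← hjoint, ENNReal.toReal_mul,
    Measure.map_apply hC (measurableSet_singleton c)]
  rfl

variable [IsFiniteMeasure μ]

lemma comp_left (hC : Measurable C) (h : HasCondPMF μ C V k) (r : γ → α) {k' : α → β → ℝ}
    (hk : ∀ ω v, k (C ω) v = k' (r (C ω)) v) : HasCondPMF μ (fun ω => r (C ω)) V k' := by
  cases nonempty_fintype γ
  intro a v
  have hfibre (c : γ) : μ.real (C ⁻¹' {c} ∩ ((fun ω => r (C ω)) ⁻¹' {a} ∩ V ⁻¹' {v})) =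
      μ.real (C ⁻¹' {c} ∩ (fun ω => r (C ω)) ⁻¹' {a}) * k' a v := by
    rcases (C ⁻¹' {c} ∩ (fun ω => r (C ω)) ⁻¹' {a}).eq_empty_or_nonempty with hempty | ⟨ω, hω, ha⟩
    · rw [← Set.inter_assoc, hempty]
      simp
    obtain rfl : C ω = c := hω
    obtain rfl : r (C ω) = a := ha
    have hsub : C ⁻¹' {C ω} ⊆ (fun ω => r (C ω)) ⁻¹' {r (C ω)} := fun ω' hω' => congrArg r hω'
    rw [← Set.inter_assoc, Set.inter_eq_left.2 hsub, h, hk]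
  rw [← sum_real_preimage_inter hC, ← sum_real_preimage_inter hC ((fun ω => r (C ω)) ⁻¹' {a}),
    Finset.sum_mul]
  exact Finset.sum_congr rfl fun c _ => hfibre c

lemma swap [MeasurableSpace α] [Finite α] [MeasurableSingletonClass α] (hC : Measurable C)
    (hA : Measurable A) {kA : γ → α → ℝ} (h : HasCondPMF μ C A kA)
    (hV : HasCondPMF μ (fun ω => (C ω, A ω)) V fun p => k p.1) :
    HasCondPMF μ (fun ω => (C ω, V ω)) A fun p => kA p.1 := by
  rintro ⟨c, v⟩ a
  have hCV : HasCondPMF μ C V k := hV.comp_left (hC.prodMk hA) Prod.fst fun _ _ => rfl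
  have hjoint := hV (c, a) v
  rw [← Set.singleton_prod_singleton, Set.mk_preimage_prod, h] at hjoint
  rw [← Set.singleton_prod_singleton, Set.mk_preimage_prod, Set.inter_right_comm, hjoint, hCV]
  ring

variable [MeasurableSpace β] [Fintype β] [MeasurableSingletonClass β]

lemma condEntropy_eq (hC : Measurable C) (hV : Measurable V) (h : HasCondPMF μ C V k) :
    condEntropy μ V C = ∫ ω, ∑ v, negMulLog (k (C ω) v) ∂μ := by
  cases nonempty_fintype γ
  rw [condEntropy_eq_sum hV hC, integral_comp_eq_sum hC fun c => ∑ v, negMulLog (k c v)]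
  refine Finset.sum_congr rfl fun c _ => ?_
  by_cases hc : μ.real (C ⁻¹' {c}) = 0
  · simp [hc]
  rw [entropy_eq_sum hV]
  simp only [real_cond_apply (hC (measurableSet_singleton c)), h c, inv_mul_cancel_left₀ hc]

end HasCondPMF

section ChannelInformation

open InformationTheory

variable {υ : Type*} [MeasurableSpace Ω] {μ : Measure Ω} [IsProbabilityMeasure μ]
  [MeasurableSpace α] [Finite α] [MeasurableSingletonClass α] {A : Ω → α}
  [MeasurableSpace β] [Finite β] [MeasurableSingletonClass β] {V : Ω → β}
  [MeasurableSpace γ] [Finite γ] [MeasurableSingletonClass γ] {C : Ω → γ}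
  [MeasurableSpace υ] [Finite υ] [MeasurableSingletonClass υ] {U : Ω → υ}

namespace HasCondPMF

lemma condMutualInfo_eq_zero (hA : Measurable A) (hC : Measurable C) (hV : Measurable V)
    {k : γ → β → ℝ} (h : HasCondPMF μ (fun ω => (A ω, C ω)) V fun p => k p.2) :
    condMutualInfo μ A V C = 0 := by
  cases nonempty_fintype β
  have hAC : Measurable fun ω => (A ω, C ω) := hA.prodMk hC
  have hmarginal : HasCondPMF μ C V k := h.comp_left hAC Prod.snd fun _ _ => rfl
  rw [condMutualInfo_comm, condMutualInfo, h.condEntropy_eq hAC hV, hmarginal.condEntropy_eq hC hV,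
    sub_self]

variable {K : Kernel υ β} [IsMarkovKernel K]

lemma map_prodMk_eq_compProd (hU : Measurable U) (hV : Measurable V)
    (h : HasCondPMF μ U V fun u v => (K u).real {v}) :
    μ.map (fun ω => (U ω, V ω)) = μ.map U ⊗ₘ K := by
  refine Measure.ext_of_singleton fun p => ?_
  rw [Measure.map_apply (hU.prodMk hV) (measurableSet_singleton _), ← Prod.mk.eta (p := p),
    ← Set.singleton_prod_singleton, Set.mk_preimage_prod,
    Measure.compProd_apply_prod (measurableSet_singleton _) (measurableSet_singleton _),
    lintegral_singleton, Measure.map_apply hU (measurableSet_singleton _), mul_comm,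
    ← ofReal_measureReal, h, ENNReal.ofReal_mul measureReal_nonneg, ofReal_measureReal,
    ofReal_measureReal]

lemma map_eq_bind (hU : Measurable U) (hV : Measurable V)
    (h : HasCondPMF μ U V fun u v => (K u).real {v}) : μ.map V = (μ.map U).bind K := by
  have hsnd := congrArg Measure.snd (h.map_prodMk_eq_compProd hU hV)
  rwa [Measure.snd_map_prodMk hU, Measure.snd_compProd] at hsnd

lemma mutualInfo_le_etaMax_mul (hA : Measurable A) (hU : Measurable U) (hV : Measurable V)
    (h : HasCondPMF μ (fun ω => (A ω, U ω)) V fun p v => (K p.2).real {v}) :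
    mutualInfo μ A V ≤ (etaMax K).toReal * mutualInfo μ A U := by
  cases nonempty_fintype α
  have hUV : HasCondPMF μ U V fun u v => (K u).real {v} :=
    h.comp_left (hA.prodMk hU) Prod.snd fun _ _ => rfl
  have : IsProbabilityMeasure (μ.map U) := Measure.isProbabilityMeasure_map hU.aemeasurable
  rw [mutualInfo_eq_sum_klDiv hA hV, mutualInfo_eq_sum_klDiv hA hU, Finset.mul_sum]
  simp only [mul_left_comm (etaMax K).toReal]
  refine sum_real_preimage_mul_le fun a _ => ?_
  have : IsProbabilityMeasure (μ[|A ⁻¹' {a}].map U) :=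
    Measure.isProbabilityMeasure_map hU.aemeasurable
  rw [hUV.map_eq_bind hU hV, (h.cond hA a).map_eq_bind hU hV]
  exact toReal_klDiv_bind_le K
    (klDiv_ne_top_of_finite (cond_absolutelyContinuous.map hU))

lemma mutualInfo_le_etaMax_mul_of_encoder (hA : Measurable A) (hC : Measurable C)
    (hV : Measurable V) (f : γ → υ)
    (h : HasCondPMF μ (fun ω => (A ω, C ω)) V fun p v => (K (f p.2)).real {v}) :
    mutualInfo μ A V ≤ (etaMax K).toReal * mutualInfo μ A C := by
  have hf : Measurable fun ω => f (C ω) := .comp .of_discrete hC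
  have hinput : HasCondPMF μ (fun ω => (A ω, f (C ω))) V fun p v => (K p.2).real {v} :=
    h.comp_left (hA.prodMk hC) (fun p => (p.1, f p.2)) fun _ _ => rfl
  refine (hinput.mutualInfo_le_etaMax_mul hA hf hV).trans ?_
  gcongr
  exact sub_le_sub_left (condEntropy_le_condEntropy_comp hA hC f) _

lemma mutualInfo_le_capacity (hA : Measurable A) (hV : Measurable V) (f : α → υ)
    (h : HasCondPMF μ A V fun a v => (K (f a)).real {v}) :
    mutualInfo μ A V ≤ capacity K * log 2 := by
  cases nonempty_fintype β
  have hf : Measurable fun ω => f (A ω) := .comp .of_discrete hA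
  have hinput : HasCondPMF μ (fun ω => f (A ω)) V fun u v => (K u).real {v} :=
    h.comp_left hA f fun _ _ => rfl
  have : IsProbabilityMeasure (μ.map fun ω => f (A ω)) :=
    Measure.isProbabilityMeasure_map hf.aemeasurable
  calc mutualInfo μ A V = mutualInfo μ (fun ω => f (A ω)) V := by
        rw [mutualInfo_comm, mutualInfo, h.condEntropy_eq hA hV,
          ← hinput.condEntropy_eq (k := fun u v => (K u).real {v}) hf hV, ← mutualInfo,
          mutualInfo_comm]
    _ = (miM (μ.map (fun ω => f (A ω)) ⊗ₘ K)).toReal * log 2 := by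
        rw [← hinput.map_prodMk_eq_compProd hf hV, toReal_miM_map hf hV,
          div_mul_cancel₀ _ log_two_pos.ne']
    _ ≤ capacity K * log 2 := by
        gcongr
        exact toReal_miM_compProd_le_capacity K _

variable {δ : Type*} [MeasurableSpace δ] [Finite δ] [MeasurableSingletonClass δ] {D : Ω → δ}

lemma condMutualInfo_le_etaMax_mul (hA : Measurable A) (hC : Measurable C) (hD : Measurable D)
    (hV : Measurable V) (f : δ → γ → υ)
    (h : HasCondPMF μ (fun ω => (D ω, A ω, C ω)) V fun p v => (K (f p.1 p.2.2)).real {v}) :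
    condMutualInfo μ A V D ≤ (etaMax K).toReal * condMutualInfo μ A C D := by
  cases nonempty_fintype δ
  rw [condMutualInfo_eq_sum hA hV hD, condMutualInfo_eq_sum hA hC hD, Finset.mul_sum]
  simp only [mul_left_comm (etaMax K).toReal]
  exact sum_real_preimage_mul_le fun c _ =>
    (h.cond hD c).mutualInfo_le_etaMax_mul_of_encoder hA hC hV (f c)

lemma condMutualInfo_le_capacity (hA : Measurable A) (hC : Measurable C) (hV : Measurable V)
    (f : γ → α → υ)
    (h : HasCondPMF μ (fun ω => (C ω, A ω)) V fun p v => (K (f p.1 p.2)).real {v}) :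
    condMutualInfo μ A V C ≤ capacity K * log 2 := by
  cases nonempty_fintype γ
  rw [condMutualInfo_eq_sum hA hV hC, ← one_mul (capacity K * log 2),
    ← sum_real_preimage_eq_one (μ := μ) hC, Finset.sum_mul]
  exact sum_real_preimage_mul_le fun c _ => (h.cond hC c).mutualInfo_le_capacity hA hV (f c)

end HasCondPMF

end ChannelInformation

section Protocol

variable {υ : Type*}

lemma pi_real_singleton {ι : Type*} [Fintype ι] [MeasurableSpace β] (ν : ι → Measure β)
    [∀ i, SigmaFinite (ν i)] (v : ι → β) : (Measure.pi ν).real {v} = ∏ i, (ν i).real {v i} := by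
  simp only [measureReal_def, Measure.pi_singleton, ENNReal.toReal_prod]

lemma kernelPi_real_singleton [MeasurableSpace υ] [Countable υ] [MeasurableSingletonClass υ]
    [MeasurableSpace β] (T : ℕ) (K : Kernel υ β) [IsFiniteKernel K] (u : Fin T → υ)
    (v : Fin T → β) : (kernelPi T K u).real {v} = ∏ t, (K (u t)).real {v t} :=
  pi_real_singleton (fun t => K (u t)) v

instance isMarkovKernel_kernelPi [MeasurableSpace υ] [Countable υ] [MeasurableSingletonClass υ]
    [MeasurableSpace β] (T : ℕ) (K : Kernel υ β) [IsMarkovKernel K] :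
    IsMarkovKernel (kernelPi T K) :=
  ⟨fun u => inferInstanceAs (IsProbabilityMeasure (Measure.pi fun t => K (u t)))⟩

/-- The first `t` outputs `V 0, …, V (t - 1)`. -/
abbrev past (V : ℕ → Ω → β) (t : ℕ) (ω : Ω) : Fin t → β := fun s => V s ω

/-- `V 0, …, V (T - 1)` are the outputs of `T` memoryless uses of the channel `K` with feedback: the
`t`-th input is computed by `φ t` from the message `A` and the first `t` outputs. -/
def IsChannelOutput [MeasurableSpace Ω] [MeasurableSpace β] [MeasurableSpace υ] (μ : Measure Ω)
    (K : Kernel υ β) (T : ℕ) (φ : (t : ℕ) → α → (Fin t → β) → υ) (A : Ω → α)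
    (V : ℕ → Ω → β) : Prop :=
  ∀ t < T, HasCondPMF μ (fun ω => (A ω, past V t ω)) (V t) fun p v => (K (φ t p.1 p.2)).real {v}

variable {A : Ω → α} {V : ℕ → Ω → β}

lemma past_succ_eq_iff {t : ℕ} {ω : Ω} {v : Fin (t + 1) → β} :
    past V (t + 1) ω = v ↔ past V t ω = (fun s => v s.castSucc) ∧ V t ω = v (Fin.last t) := by
  simp [past, funext_iff, Fin.forall_fin_succ']

variable [MeasurableSpace Ω] {μ : Measure Ω}

lemma mutualInfo_past_succ (A : Ω → α) (V : ℕ → Ω → β) (t : ℕ) :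
    mutualInfo μ A (past V (t + 1)) =
      mutualInfo μ A (past V t) + condMutualInfo μ A (V t) (past V t) := by
  rw [← mutualInfo_prodMk_right, mutualInfo, mutualInfo, condEntropy_congr_right fun ω ω' => ?_]
  rw [past_succ_eq_iff, and_comm, Prod.mk.injEq]
  rfl

variable [MeasurableSpace β]

lemma measurable_past (hV : ∀ t, Measurable (V t)) (t : ℕ) : Measurable (past V t) :=
  measurable_pi_lambda _ fun s => hV s

lemma mutualInfo_past_zero_le [IsProbabilityMeasure μ] [MeasurableSingletonClass β]
    [MeasurableSpace α] [Finite α] [MeasurableSingletonClass α] (hA : Measurable A)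
    (hV : ∀ t, Measurable (V t)) : mutualInfo μ A (past V 0) ≤ 0 := by
  rw [mutualInfo_comm]
  simpa using mutualInfo_le_log_card (μ := μ) (measurable_past hV 0) hA

namespace IsChannelOutput

variable [MeasurableSpace υ] {K : Kernel υ β} {T : ℕ}

lemma hasCondPMF_past {φ : (t : ℕ) → α → (Fin t → β) → υ} (h : IsChannelOutput μ K T φ A V)
    {t : ℕ} (ht : t ≤ T) :
    HasCondPMF μ A (past V t) fun a v =>
      ∏ i : Fin t, (K (φ i a fun j => v (j.castLE i.is_lt.le))).real {v i} := by
  induction t with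
  | zero =>
    intro a v
    have huniv : past V 0 ⁻¹' {v} = Set.univ := Set.eq_univ_of_forall fun ω => Subsingleton.elim _ _
    simp [huniv]
  | succ t ih =>
    intro a v
    have hsplit : past V (t + 1) ⁻¹' {v} =
        past V t ⁻¹' {fun s => v s.castSucc} ∩ V t ⁻¹' {v (Fin.last t)} :=
      Set.ext fun ω => past_succ_eq_iff
    have hlast := h t ht (a, fun s => v s.castSucc) (v (Fin.last t))
    rw [← Set.singleton_prod_singleton, Set.mk_preimage_prod, ih (by lia)] at hlast
    rw [hsplit, ← Set.inter_assoc, hlast]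
    beta_reduce
    rw [Fin.prod_univ_castSucc, mul_assoc]
    rfl

variable [Finite β] [MeasurableSingletonClass β]
  [MeasurableSpace α] [Finite α] [MeasurableSingletonClass α]

lemma comp_left [IsFiniteMeasure μ] {φ : (t : ℕ) → α → (Fin t → β) → υ} (hA : Measurable A)
    (hV : ∀ t, Measurable (V t)) (h : IsChannelOutput μ K T φ A V) (r : α → γ)
    {φ' : (t : ℕ) → γ → (Fin t → β) → υ} (hφ : ∀ t a v, φ t a v = φ' t (r a) v) :
    IsChannelOutput μ K T φ' (fun ω => r (A ω)) V := fun t ht =>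
  (h t ht).comp_left (hA.prodMk (measurable_past hV t)) (fun p => (r p.1, p.2)) fun ω v => by
    rw [hφ]

variable [IsProbabilityMeasure μ]
  [MeasurableSpace γ] [Finite γ] [MeasurableSingletonClass γ] {Y : Ω → γ}

lemma of_condDistrib [Nonempty β] {U : ℕ → Ω → υ} [Finite υ] [MeasurableSingletonClass υ]
    {φ : (t : ℕ) → α × γ → (Fin t → β) → υ} (hA : Measurable A) (hY : Measurable Y)
    (hU : ∀ t, Measurable (U t)) (hV : ∀ t, Measurable (V t))
    (hencode : ∀ t < T, ∀ ω, U t ω = φ t (A ω, Y ω) (past V t ω))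
    (hchannel : ∀ t < T, ∀ᵐ p ∂μ.map fun ω => ((A ω, Y ω, past V t ω), U t ω),
      condDistrib (V t) (fun ω => ((A ω, Y ω, past V t ω), U t ω)) μ p = K p.2) :
    IsChannelOutput μ K T φ (fun ω => (A ω, Y ω)) V := fun t ht =>
  have hinput := (hA.prodMk (hY.prodMk (measurable_past hV t))).prodMk (hU t)
  (HasCondPMF.of_condDistrib hinput (hV t) (κ := fun p => K p.2) (hchannel t ht)).comp_left hinput
    (fun p => ((p.1.1, p.1.2.1), p.1.2.2)) fun ω v => by rw [hencode t ht ω]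

lemma condMutualInfo_past_eq_zero {φ : (t : ℕ) → γ → (Fin t → β) → υ} (hA : Measurable A)
    (hY : Measurable Y) (hV : ∀ t, Measurable (V t))
    (h : IsChannelOutput μ K T (fun t p => φ t p.2) (fun ω => (A ω, Y ω)) V) {t : ℕ} (ht : t ≤ T) :
    condMutualInfo μ A (past V t) Y = 0 :=
  (h.hasCondPMF_past ht).condMutualInfo_eq_zero hA hY (measurable_past hV t)
    (k := fun y v => ∏ i : Fin t, (K (φ i y fun j => v (j.castLE i.is_lt.le))).real {v i})

variable [Finite υ] [MeasurableSingletonClass υ] [IsMarkovKernel K]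

lemma mutualInfo_past_le_capacity {φ : (t : ℕ) → α → (Fin t → β) → υ} (hA : Measurable A)
    (hV : ∀ t, Measurable (V t)) (h : IsChannelOutput μ K T φ A V) {t : ℕ} (ht : t ≤ T) :
    mutualInfo μ A (past V t) ≤ t * (capacity K * log 2) := by
  induction t with
  | zero =>
    simpa using mutualInfo_past_zero_le hA hV
  | succ t ih =>
    have huse : HasCondPMF μ (fun ω => (past V t ω, A ω)) (V t) fun p v =>
        (K (φ t p.2 p.1)).real {v} :=
      (h t ht).comp_left (hA.prodMk (measurable_past hV t)) Prod.swap fun _ _ => rfl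
    have hstep := huse.condMutualInfo_le_capacity hA (measurable_past hV t) (hV t)
      fun v a => φ t a v
    rw [mutualInfo_past_succ]
    push_cast
    linarith [ih (by lia)]

lemma mutualInfo_past_succ_le {φ : (t : ℕ) → γ → (Fin t → β) → υ} (hA : Measurable A)
    (hY : Measurable Y) (hV : ∀ t, Measurable (V t))
    (h : IsChannelOutput μ K T (fun t p => φ t p.2) (fun ω => (A ω, Y ω)) V) {t : ℕ} (ht : t < T) :
    mutualInfo μ A (past V (t + 1)) ≤ (1 - (etaMax K).toReal) * mutualInfo μ A (past V t) +
      (etaMax K).toReal * mutualInfo μ A Y := by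
  have huse : HasCondPMF μ (fun ω => (past V t ω, A ω, Y ω)) (V t) fun p v =>
      (K (φ t p.2.2 p.1)).real {v} :=
    (h t ht).comp_left ((hA.prodMk hY).prodMk (measurable_past hV t)) Prod.swap fun _ _ => rfl
  have hstep := huse.condMutualInfo_le_etaMax_mul hA hY (measurable_past hV t) (hV t)
    fun v y => φ t y v
  have hmarkov := h.condMutualInfo_past_eq_zero hA hY hV ht.le
  have hchain : mutualInfo μ A (past V t) + condMutualInfo μ A Y (past V t) =
      mutualInfo μ A Y + condMutualInfo μ A (past V t) Y := by
    rw [← mutualInfo_prodMk_right, ← mutualInfo_prodMk_right, mutualInfo, mutualInfo,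
      condEntropy_congr_right (Y := fun ω => (Y ω, past V t ω)) (C := fun ω => (past V t ω, Y ω))
        fun ω ω' => by simp only [Prod.mk.injEq, and_comm]]
  rw [hmarkov, add_zero] at hchain
  rw [mutualInfo_past_succ, ← hchain]
  linarith

lemma mutualInfo_past_le_etaMax {φ : (t : ℕ) → γ → (Fin t → β) → υ} (hA : Measurable A)
    (hY : Measurable Y) (hV : ∀ t, Measurable (V t))
    (h : IsChannelOutput μ K T (fun t p => φ t p.2) (fun ω => (A ω, Y ω)) V) {t : ℕ} (ht : t ≤ T) :
    mutualInfo μ A (past V t) ≤ (1 - (1 - (etaMax K).toReal) ^ t) * mutualInfo μ A Y := by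
  induction t with
  | zero =>
    simpa using mutualInfo_past_zero_le hA hV
  | succ t ih =>
    have hη : 0 ≤ 1 - (etaMax K).toReal := sub_nonneg.2 (toReal_etaMax_le_one K)
    calc mutualInfo μ A (past V (t + 1))
        ≤ (1 - (etaMax K).toReal) * mutualInfo μ A (past V t) +
            (etaMax K).toReal * mutualInfo μ A Y := h.mutualInfo_past_succ_le hA hY hV ht
      _ ≤ (1 - (etaMax K).toReal) * ((1 - (1 - (etaMax K).toReal) ^ t) * mutualInfo μ A Y) +
            (etaMax K).toReal * mutualInfo μ A Y := by gcongr; exact ih (by lia)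
      _ = (1 - (1 - (etaMax K).toReal) ^ (t + 1)) * mutualInfo μ A Y := by ring

lemma mutualInfo_past_le_etaMax_kernelPi {u : ℕ → γ → υ} (hA : Measurable A)
    (hY : Measurable Y) (hV : ∀ t, Measurable (V t))
    (h : IsChannelOutput μ K T (fun t p _ => u t p.2) (fun ω => (A ω, Y ω)) V) :
    mutualInfo μ A (past V T) ≤ (etaMax (kernelPi T K)).toReal * mutualInfo μ A Y := by
  have hblock : HasCondPMF μ (fun ω => (A ω, Y ω)) (past V T) fun p v =>
      (kernelPi T K fun i => u i p.2).real {v} := by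
    simpa only [kernelPi_real_singleton] using h.hasCondPMF_past le_rfl
  exact hblock.mutualInfo_le_etaMax_mul_of_encoder hA hY (measurable_past hV T) fun y i => u i y

end IsChannelOutput

end Protocol

section Coordinates

lemma sum_prod_eq_one {ι : Type*} [Fintype ι] [DecidableEq ι] [Fintype α] (f : ι → α → ℝ)
    (hf : ∀ i, ∑ a, f i a = 1) : ∑ v : ι → α, ∏ i, f i (v i) = 1 := by
  rw [← Fintype.piFinset_univ, ← Finset.prod_univ_sum]
  simp only [hf, Finset.prod_const_one]

lemma sum_negMulLog_prod {d : ℕ} [Fintype α] (f : Fin d → α → ℝ) (hf : ∀ i, ∑ a, f i a = 1) :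
    ∑ v : Fin d → α, negMulLog (∏ i, f i (v i)) = ∑ i, ∑ a, negMulLog (f i a) := by
  induction d with
  | zero => simp
  | succ d ih =>
    have hprod := sum_prod_eq_one (fun i : Fin d => f i.succ) fun i => hf i.succ
    rw [← (Fin.consEquiv fun _ => α).sum_comp, Fintype.sum_prod_type, Fin.sum_univ_succ,
      ← ih (fun i => f i.succ) fun i => hf i.succ]
    simp only [Fin.consEquiv_apply, Fin.prod_univ_succ, Fin.cons_zero, Fin.cons_succ, negMulLog_mul,
      Finset.sum_add_distrib, ← Finset.mul_sum, ← Finset.sum_mul, hf, hprod, one_mul]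

variable [MeasurableSpace Ω] {μ : Measure Ω} {d : ℕ}

lemma condEntropy_fin_succ (X : Ω → Fin (d + 1) → α) (C : Ω → γ) :
    condEntropy μ X C = condEntropy μ (fun ω => Fin.tail (X ω)) C +
      condEntropy μ (fun ω => X ω 0) fun ω => (Fin.tail (X ω), C ω) := by
  rw [← condEntropy_prodMk]
  refine condEntropy_congr_left fun ω ω' _ => ?_
  rw [← (Fin.consEquiv fun _ => α).symm.injective.eq_iff]
  rfl

variable [IsProbabilityMeasure μ] [MeasurableSpace α] [MeasurableSingletonClass α]
  [MeasurableSpace γ] [Finite γ] [MeasurableSingletonClass γ] {C : Ω → γ}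

lemma condEntropy_eq_zero_of_subsingleton [Subsingleton α] {X : Ω → α} (hX : Measurable X)
    (hC : Measurable C) : condEntropy μ X C = 0 := by
  cases nonempty_fintype α
  have hcard : Fintype.card α ≤ 1 := Fintype.card_le_one_iff_subsingleton.2 ‹_›
  refine le_antisymm ?_ (condEntropy_nonneg hX hC)
  calc condEntropy μ X C ≤ entropy μ X := condEntropy_le_entropy hX hC
    _ ≤ log (Fintype.card α) := entropy_le_log_card μ hX
    _ ≤ 0 := log_nonpos (Nat.cast_nonneg _) (mod_cast hcard)

lemma condEntropy_le_sum [Finite α] {X : Ω → Fin d → α} (hX : Measurable X) (hC : Measurable C) :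
    condEntropy μ X C ≤ ∑ i, condEntropy μ (fun ω => X ω i) C := by
  induction d with
  | zero =>
    rw [condEntropy_eq_zero_of_subsingleton hX hC]
    simp
  | succ d ih =>
    have hcoord (i : Fin (d + 1)) : Measurable fun ω => X ω i := (measurable_pi_apply i).comp hX
    have htail : Measurable fun ω => Fin.tail (X ω) :=
      measurable_pi_lambda _ fun i => hcoord i.succ
    rw [condEntropy_fin_succ, Fin.sum_univ_succ, add_comm]
    exact add_le_add (condEntropy_le_condEntropy_comp (hcoord 0) (htail.prodMk hC) Prod.snd)
      (ih htail)

end Coordinates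

section Fano

lemma sum_binEntropy_le {d : ℕ} (q : Fin d → ℝ) (hq : ∀ i, q i ∈ Set.Icc 0 1) :
    ∑ i, binEntropy (q i) ≤ d * binEntropy ((∑ i, q i) / d) := by
  rcases d.eq_zero_or_pos with rfl | hd
  · simp
  have hd' : (0 : ℝ) < d := mod_cast hd
  have hjensen := strictConcave_binEntropy.concaveOn.le_map_sum (t := Finset.univ)
    (w := fun _ : Fin d => (d : ℝ)⁻¹) (p := q) (fun _ _ => by positivity)
    (by simp [hd'.ne']) fun i _ => hq i
  simp only [smul_eq_mul, ← div_eq_inv_mul, ← Finset.sum_div] at hjensen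
  rwa [div_le_iff₀' hd'] at hjensen

variable [MeasurableSpace Ω] {μ : Measure Ω} [IsProbabilityMeasure μ]

lemma entropy_eq_binEntropy {X : Ω → Bool} (hX : Measurable X) :
    entropy μ X = binEntropy (μ.real (X ⁻¹' {true})) := by
  have htotal := sum_real_preimage_eq_one (μ := μ) hX
  rw [Fintype.sum_bool] at htotal
  rw [entropy_eq_sum hX, Fintype.sum_bool, binEntropy_eq_negMulLog_add_negMulLog_one_sub,
    ← eq_sub_of_add_eq' htotal]

lemma integral_card_filter {μ : Measure Ω} [IsFiniteMeasure μ] {ι : Type*} [Fintype ι]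
    {P : Ω → ι → Prop} [∀ ω, DecidablePred (P ω)] (hP : ∀ i, MeasurableSet {ω | P ω i}) :
    ∫ ω, ((Finset.univ.filter (P ω)).card : ℝ) ∂μ = ∑ i, μ.real {ω | P ω i} := by
  have hind (ω : Ω) : ((Finset.univ.filter (P ω)).card : ℝ) =
      ∑ i, {ω | P ω i}.indicator (fun _ => (1 : ℝ)) ω := by
    simp [Set.indicator_apply]
  simp only [hind]
  rw [integral_finsetSum _ fun i _ => (integrable_const 1).indicator (hP i)]
  exact Finset.sum_congr rfl fun i _ => integral_indicator_one (hP i)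

variable [MeasurableSpace γ] [Finite γ] [MeasurableSingletonClass γ] {C : Ω → γ}

lemma condEntropy_le_binEntropy_error {X : Ω → Bool} (hX : Measurable X) (hC : Measurable C)
    (g : γ → Bool) : condEntropy μ X C ≤ binEntropy (μ.real {ω | X ω ≠ g (C ω)}) := by
  have herr : Measurable fun ω => X ω ^^ g (C ω) :=
    (Measurable.of_discrete (f := fun p : Bool × γ => p.1 ^^ g p.2)).comp (hX.prodMk hC)
  have hset : {ω | X ω ≠ g (C ω)} = (fun ω => X ω ^^ g (C ω)) ⁻¹' {true} := by
    ext ω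
    simp
  rw [hset, ← entropy_eq_binEntropy herr,
    condEntropy_congr_left (Y := fun ω => X ω ^^ g (C ω)) fun ω ω' hω => by simp [hω]]
  exact condEntropy_le_entropy herr hC

lemma condEntropy_le_binEntropy_bitError {d : ℕ} {X : Ω → Fin d → Bool} (hX : Measurable X)
    (hC : Measurable C) (g : γ → Fin d → Bool) :
    condEntropy μ X C ≤
      d * binEntropy (∫ ω, ((Finset.univ.filter fun i => X ω i ≠ g (C ω) i).card : ℝ) / d ∂μ) := by
  have hcoord (i : Fin d) : Measurable fun ω => X ω i := (measurable_pi_apply i).comp hX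
  have hguess (i : Fin d) : Measurable fun ω => g (C ω) i :=
    (Measurable.of_discrete (f := fun c => g c i)).comp hC
  have herr (i : Fin d) : MeasurableSet {ω | X ω i ≠ g (C ω) i} :=
    (measurableSet_eq_fun (hcoord i) (hguess i)).compl
  rw [integral_div, integral_card_filter herr]
  calc condEntropy μ X C ≤ ∑ i, condEntropy μ (fun ω => X ω i) C := condEntropy_le_sum hX hC
    _ ≤ ∑ i, binEntropy (μ.real {ω | X ω i ≠ g (C ω) i}) := Finset.sum_le_sum fun i _ =>
        condEntropy_le_binEntropy_error (hcoord i) hC fun c => g c i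
    _ ≤ _ := sum_binEntropy_le _ fun i => ⟨measureReal_nonneg, measureReal_le_one⟩

end Fano

section ProductChannel

namespace HasCondPMF

variable [MeasurableSpace Ω] {μ : Measure Ω} {C : Ω → γ} {d : ℕ} {V : Ω → Fin (d + 1) → β}
  {k : γ → Fin (d + 1) → β → ℝ}

lemma pi_split (h : HasCondPMF μ C V fun c v => ∏ i, k c i (v i)) :
    HasCondPMF μ C (fun ω => (Fin.tail (V ω), V ω 0)) fun c v =>
      (∏ i, k c (Fin.succ i) (v.1 i)) * k c 0 v.2 := by
  have hequiv := h.comp_equiv ((Fin.consEquiv fun _ => β).symm.trans (Equiv.prodComm _ _))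
  simpa [Fin.prod_univ_succ, mul_comm] using hequiv

variable [IsFiniteMeasure μ] [MeasurableSpace β] [MeasurableSingletonClass β]

lemma pi_tail [Fintype β] (hV₀ : Measurable fun ω => V ω 0)
    (hsum : ∀ c i, ∑ v, k c i v = 1) (h : HasCondPMF μ C V fun c v => ∏ i, k c i (v i)) :
    HasCondPMF μ C (fun ω => Fin.tail (V ω)) fun c v => ∏ i, k c (Fin.succ i) (v i) :=
  h.pi_split.fst hV₀ (kV := fun c _ => k c 0) fun c _ => hsum c 0

lemma pi_head [Fintype β] (hV₀ : Measurable fun ω => V ω 0)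
    (hsum : ∀ c i, ∑ v, k c i v = 1) (h : HasCondPMF μ C V fun c v => ∏ i, k c i (v i)) :
    HasCondPMF μ (fun ω => (C ω, Fin.tail (V ω))) (fun ω => V ω 0) fun p => k p.1 0 :=
  h.pi_split.snd hV₀ (kA := fun c v => ∏ i, k c (Fin.succ i) (v i)) (kV := fun c _ => k c 0)
    fun c _ => hsum c 0

lemma condEntropy_head_le {μ : Measure Ω} [IsProbabilityMeasure μ]
    [Finite β] [MeasurableSpace α] [Finite α] [MeasurableSingletonClass α]
    [MeasurableSpace γ] [Finite γ] [MeasurableSingletonClass γ] {X : Ω → Fin (d + 1) → α}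
    {U : Ω → β} (hX : Measurable X) (hC : Measurable C) (hU : Measurable U)
    {k : γ → (Fin d → α) → β → ℝ}
    (h : HasCondPMF μ (fun ω => (C ω, X ω)) U fun p => k p.1 (Fin.tail p.2)) :
    condEntropy μ (fun ω => X ω 0) (fun ω => (Fin.tail (X ω), C ω)) ≤
      condEntropy μ (fun ω => X ω 0) fun ω => (U ω, C ω) := by
  have hX₀ : Measurable fun ω => X ω 0 := (measurable_pi_apply 0).comp hX
  have hrest : Measurable fun ω => (Fin.tail (X ω), C ω) :=
    ((Measurable.of_discrete (f := Fin.tail)).comp hX).prodMk hC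
  have hmarkov := (h.comp_left (hC.prodMk hX) (fun p => (p.2 0, Fin.tail p.2, p.1))
    fun _ _ => rfl).condMutualInfo_eq_zero hX₀ hrest hU (k := fun p => k p.2 p.1)
  rw [condMutualInfo, sub_eq_zero] at hmarkov
  rw [hmarkov]
  exact condEntropy_le_condEntropy_comp hX₀ (hU.prodMk hrest) fun p => (p.1, p.2.2)

end HasCondPMF

end ProductChannel

section Uniform

lemma entropy_eq_neg_log_of_uniform [MeasurableSpace Ω] {μ : Measure Ω} [IsProbabilityMeasure μ]
    {X : Ω → α} {p : ℝ} (h : ∀ x, μ.real (X ⁻¹' {x}) = p) : entropy μ X = -log p := by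
  simp [entropy, h]

namespace HasCondPMF

variable [MeasurableSpace Ω] {μ : Measure Ω} [IsFiniteMeasure μ]
  [MeasurableSpace γ] [Fintype γ] [MeasurableSingletonClass γ] {C : Ω → γ} {V : Ω → β}
  {k : γ → β → ℝ} {p : ℝ}

lemma real_preimage_eq_of_uniform (hC : Measurable C) (h : HasCondPMF μ C V k)
    (hunif : ∀ c, μ.real (C ⁻¹' {c}) = p) (hsum : ∀ v, ∑ c, k c v = 1) (v : β) :
    μ.real (V ⁻¹' {v}) = p := by
  rw [← sum_real_preimage_inter hC]
  simp only [h _ v, hunif, ← Finset.mul_sum, hsum, mul_one]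

lemma reverse_of_uniform (hC : Measurable C) (h : HasCondPMF μ C V k)
    (hunif : ∀ c, μ.real (C ⁻¹' {c}) = p) (hsum : ∀ v, ∑ c, k c v = 1) :
    HasCondPMF μ V C fun v c => k c v := by
  intro v c
  rw [Set.inter_comm, h, hunif, h.real_preimage_eq_of_uniform hC hunif hsum]

end HasCondPMF

end Uniform

section BinarySymmetricChannel

lemma hasSum_log_two_sub_binEntropy {x : ℝ} (hx : |x| < 1) :
    HasSum (fun k : ℕ => x ^ (2 * k + 2) * (1 / (2 * k + 1) - 1 / (2 * k + 2) : ℝ))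
      (log 2 - binEntropy ((1 - x) / 2)) := by
  have hx2 : |x ^ 2| < 1 := by
    rw [abs_pow]
    exact pow_lt_one₀ (abs_nonneg _) hx two_ne_zero
  have hseries := (((hasSum_log_sub_log_of_abs_lt_one hx).mul_left x).sub
    (hasSum_pow_div_log_of_abs_lt_one hx2)).mul_left (1 / 2)
  convert hseries using 1
  · rfl
  · ext k
    field_simp
    ring
  · have hneg : 0 < 1 - x := sub_pos.2 (abs_lt.1 hx).2
    have hpos : 0 < 1 + x := neg_lt_iff_pos_add'.1 (abs_lt.1 hx).1
    rw [binEntropy_eq_negMulLog_add_negMulLog_one_sub, show 1 - (1 - x) / 2 = (1 + x) / 2 by ring,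
      show 1 - x ^ 2 = (1 - x) * (1 + x) by ring, log_mul hneg.ne' hpos.ne', negMulLog, negMulLog,
      log_div hneg.ne' two_ne_zero, log_div hpos.ne' two_ne_zero]
    ring

variable {δ : ℝ}

lemma log_two_sub_binEntropy_mul_le_of_abs_lt {x : ℝ} (hx : |x| < 1) (hδ0 : 0 ≤ δ) (hδ1 : δ ≤ 1) :
    log 2 - binEntropy ((1 - δ * x) / 2) ≤ δ ^ 2 * (log 2 - binEntropy ((1 - x) / 2)) := by
  have hδx : |δ * x| < 1 := by
    rw [abs_mul, abs_of_nonneg hδ0]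
    exact (mul_le_of_le_one_left (abs_nonneg _) hδ1).trans_lt hx
  refine hasSum_le (fun k => ?_) (hasSum_log_two_sub_binEntropy hδx)
    ((hasSum_log_two_sub_binEntropy hx).mul_left _)
  have hcoeff : (0 : ℝ) ≤ 1 / (2 * k + 1) - 1 / (2 * k + 2) :=
    sub_nonneg.2 (one_div_le_one_div_of_le (by positivity) (by linarith))
  have heven : 0 ≤ x ^ (2 * k + 2) := (even_two_mul (k + 1)).pow_nonneg x
  rw [mul_pow, ← mul_assoc]
  gcongr ?_ * _ * _
  exact pow_le_pow_of_le_one hδ0 hδ1 (by lia)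

lemma log_two_sub_binEntropy_mul_le {x : ℝ} (hx : x ∈ Set.Icc (-1) 1) (hδ0 : 0 ≤ δ) (hδ1 : δ ≤ 1) :
    log 2 - binEntropy ((1 - δ * x) / 2) ≤ δ ^ 2 * (log 2 - binEntropy ((1 - x) / 2)) := by
  rw [← closure_Ioo (by norm_num : (-1 : ℝ) ≠ 1)] at hx
  exact le_on_closure (f := fun x => log 2 - binEntropy ((1 - δ * x) / 2))
    (fun y hy => log_two_sub_binEntropy_mul_le_of_abs_lt (abs_lt.2 hy) hδ0 hδ1)
    (by fun_prop) (by fun_prop) hx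

variable {ε : ℝ}

lemma bsc_real_singleton (hε0 : 0 ≤ ε) (hε1 : ε ≤ 1) (x y : Bool) :
    (bsc ε x).real {y} = if x = y then 1 - ε else ε := by
  change (ENNReal.ofReal ε • Measure.dirac (!x) +
    ENNReal.ofReal (1 - ε) • Measure.dirac x).real _ = _
  cases x <;> cases y <;> simp [measureReal_def, Set.indicator, hε0, hε1]

lemma isMarkovKernel_bsc (hε0 : 0 ≤ ε) (hε1 : ε ≤ 1) : IsMarkovKernel (bsc ε) := by
  refine ⟨fun x => ⟨?_⟩⟩
  change (ENNReal.ofReal ε • Measure.dirac (!x) + ENNReal.ofReal (1 - ε) • Measure.dirac x) _ = _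
  simp [← ENNReal.ofReal_add hε0 (sub_nonneg.2 hε1)]

lemma sum_bsc_real (hε0 : 0 ≤ ε) (hε1 : ε ≤ 1) (x : Bool) : ∑ y, (bsc ε x).real {y} = 1 := by
  cases x <;> simp [bsc_real_singleton hε0 hε1]

lemma bsc_real_comm (hε0 : 0 ≤ ε) (hε1 : ε ≤ 1) (x y : Bool) :
    (bsc ε x).real {y} = (bsc ε y).real {x} := by
  simp only [bsc_real_singleton hε0 hε1, eq_comm]

lemma sum_prod_bsc_real {ι : Type*} [Fintype ι] [DecidableEq ι] (hε0 : 0 ≤ ε) (hε1 : ε ≤ 1)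
    (y : ι → Bool) : ∑ x : ι → Bool, ∏ i, (bsc ε (x i)).real {y i} = 1 := by
  simp only [bsc_real_comm hε0 hε1 _ (y _)]
  exact sum_prod_eq_one _ fun i => sum_bsc_real hε0 hε1 (y i)

lemma sum_negMulLog_bsc_real (hε0 : 0 ≤ ε) (hε1 : ε ≤ 1) (x : Bool) :
    ∑ y, negMulLog ((bsc ε x).real {y}) = binEntropy ε := by
  rw [binEntropy_eq_negMulLog_add_negMulLog_one_sub]
  cases x <;> simp [bsc_real_singleton hε0 hε1, add_comm]

namespace HasCondPMF

variable [MeasurableSpace Ω] {μ : Measure Ω} [IsProbabilityMeasure μ]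

lemma condEntropy_bsc_pi {d : ℕ} {X W : Ω → Fin d → Bool} (hX : Measurable X) (hW : Measurable W)
    (hε0 : 0 ≤ ε) (hε1 : ε ≤ 1) (h : HasCondPMF μ X W fun x w => ∏ i, (bsc ε (x i)).real {w i}) :
    condEntropy μ W X = d * binEntropy ε := by
  rw [h.condEntropy_eq hX hW]
  simp only [sum_negMulLog_prod _ fun _ => sum_bsc_real hε0 hε1 _, sum_negMulLog_bsc_real hε0 hε1]
  simp

lemma log_two_sub_entropy_le_bsc {X W : Ω → Bool} (hX : Measurable X) (hW : Measurable W)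
    (hδ0 : 0 ≤ δ) (hδ1 : δ ≤ 1)
    (h : HasCondPMF μ X W fun x w => (bsc ((1 - δ) / 2) x).real {w}) :
    log 2 - entropy μ W ≤ δ ^ 2 * (log 2 - entropy μ X) := by
  set p := μ.real (X ⁻¹' {true}) with hp
  have htotal := sum_real_preimage_eq_one (μ := μ) hX
  rw [Fintype.sum_bool, ← hp] at htotal
  have houtput : μ.real (W ⁻¹' {true}) = (1 - δ * (1 - 2 * p)) / 2 := by
    have hε0 : 0 ≤ (1 - δ) / 2 := by linarith
    have hε1 : (1 - δ) / 2 ≤ 1 := by linarith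
    rw [← sum_real_preimage_inter hX, Fintype.sum_bool, h, h, ← hp, eq_sub_of_add_eq' htotal]
    simp only [bsc_real_singleton hε0 hε1, if_true, Bool.false_eq_true, if_false]
    ring
  have hinput : p = (1 - (1 - 2 * p)) / 2 := by ring
  rw [entropy_eq_binEntropy hW, entropy_eq_binEntropy hX, houtput, ← hp]
  conv_rhs => rw [hinput]
  have hp0 : 0 ≤ p := measureReal_nonneg
  have hp1 : p ≤ 1 := measureReal_le_one
  exact log_two_sub_binEntropy_mul_le ⟨by linarith, by linarith⟩ hδ0 hδ1

variable [MeasurableSpace γ] [Finite γ] [MeasurableSingletonClass γ] {C : Ω → γ}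

lemma log_two_sub_condEntropy_le_bsc {X W : Ω → Bool} (hX : Measurable X) (hW : Measurable W)
    (hC : Measurable C) (hδ0 : 0 ≤ δ) (hδ1 : δ ≤ 1)
    (h : HasCondPMF μ (fun ω => (C ω, X ω)) W fun p w => (bsc ((1 - δ) / 2) p.2).real {w}) :
    log 2 - condEntropy μ W C ≤ δ ^ 2 * (log 2 - condEntropy μ X C) := by
  cases nonempty_fintype γ
  have hdeficit {Z : Ω → Bool} (hZ : Measurable Z) : log 2 - condEntropy μ Z C =
      ∑ c, μ.real (C ⁻¹' {c}) * (log 2 - entropy μ[|C ⁻¹' {c}] Z) := by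
    simp only [condEntropy_eq_sum hZ hC, mul_sub, Finset.sum_sub_distrib, ← Finset.sum_mul,
      sum_real_preimage_eq_one hC, one_mul]
  rw [hdeficit hW, hdeficit hX, Finset.mul_sum]
  simp only [mul_left_comm (δ ^ 2)]
  exact sum_real_preimage_mul_le fun c _ =>
    (h.cond hC c).log_two_sub_entropy_le_bsc hX hW hδ0 hδ1

lemma log_two_sub_condEntropy_le_bsc_pi {d : ℕ} {X W : Ω → Fin d → Bool} (hX : Measurable X)
    (hW : Measurable W) (hC : Measurable C) (hδ0 : 0 ≤ δ) (hδ1 : δ ≤ 1)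
    (h : HasCondPMF μ (fun ω => (C ω, X ω)) W fun p w =>
      ∏ i, (bsc ((1 - δ) / 2) (p.2 i)).real {w i}) :
    d * log 2 - condEntropy μ W C ≤ δ ^ 2 * (d * log 2 - condEntropy μ X C) := by
  induction d with
  | zero =>
    rw [condEntropy_eq_zero_of_subsingleton hW hC, condEntropy_eq_zero_of_subsingleton hX hC]
    simp
  | succ d ih =>
    have hX₀ : Measurable fun ω => X ω 0 := (measurable_pi_apply 0).comp hX
    have hW₀ : Measurable fun ω => W ω 0 := (measurable_pi_apply 0).comp hW
    have hXt : Measurable fun ω => Fin.tail (X ω) :=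
      (Measurable.of_discrete (f := Fin.tail)).comp hX
    have hWt : Measurable fun ω => Fin.tail (W ω) :=
      (Measurable.of_discrete (f := Fin.tail)).comp hW
    have hsum (p : γ × (Fin (d + 1) → Bool)) (i : Fin (d + 1)) :
        ∑ w, (bsc ((1 - δ) / 2) (p.2 i)).real {w} = 1 :=
      sum_bsc_real (by linarith) (by linarith) _
    have hhead : HasCondPMF μ (fun ω => ((Fin.tail (W ω), C ω), X ω 0)) (fun ω => W ω 0)
        fun p w => (bsc ((1 - δ) / 2) p.2).real {w} :=
      (h.pi_head hW₀ hsum).comp_left ((hC.prodMk hX).prodMk hWt)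
        (fun p => ((p.2, p.1.1), p.1.2 0)) fun _ _ => rfl
    have htail := h.pi_tail hW₀ hsum
    have hmarkov := htail.condEntropy_head_le hX hC hWt
      (k := fun _ x w => ∏ i, (bsc ((1 - δ) / 2) (x i)).real {w i})
    have htail_le := ih hXt hWt
      (htail.comp_left (hC.prodMk hX) (fun p => (p.1, Fin.tail p.2)) fun _ _ => rfl)
    have hhead_le := hhead.log_two_sub_condEntropy_le_bsc hX₀ hW₀ (hWt.prodMk hC) hδ0 hδ1
    rw [condEntropy_fin_succ W, condEntropy_fin_succ X]
    push_cast
    linarith [mul_le_mul_of_nonneg_left hmarkov (sq_nonneg δ)]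

end HasCondPMF

end BinarySymmetricChannel

section Model

lemma isProbabilityMeasure_bern {p : ℝ} (hp0 : 0 ≤ p) (hp1 : p ≤ 1) :
    IsProbabilityMeasure (bern p) :=
  ⟨by simp [bern, ← ENNReal.ofReal_add hp0 (sub_nonneg.2 hp1)]⟩

lemma bern_half_real_singleton (x : Bool) : (bern (1 / 2)).real {x} = 1 / 2 := by
  cases x <;> norm_num [bern, measureReal_def, Set.indicator]

variable [MeasurableSpace Ω] {d : ℕ}

/-- The statistical model: the parameter `W` is uniform on `{−1, 1}^d`, encoded as `Fin d → Bool`,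
and the sample `X` arises by flipping each bit of `W` independently with probability
`(1 - δ) / 2`. -/
structure IsNoisyBits (μ : Measure Ω) (δ : ℝ) (W X : Ω → Fin d → Bool) : Prop where
  nonneg : 0 ≤ δ
  le_one : δ ≤ 1
  measurable_param : Measurable W
  measurable_sample : Measurable X
  real_preimage_param (w : Fin d → Bool) : μ.real (W ⁻¹' {w}) = (1 / 2) ^ d
  hasCondPMF : HasCondPMF μ W X fun w x => ∏ i, (bsc ((1 - δ) / 2) (w i)).real {x i}

/-- The expected fraction of the bits of `W` that `Ŵ` gets wrong. -/
def bitErrorRate (μ : Measure Ω) (W Ŵ : Ω → Fin d → Bool) : ℝ :=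
  ∫ ω, ((Finset.univ.filter fun j => W ω j ≠ Ŵ ω j).card : ℝ) / d ∂μ

lemma bitErrorRate_nonneg (μ : Measure Ω) (W Ŵ : Ω → Fin d → Bool) : 0 ≤ bitErrorRate μ W Ŵ :=
  integral_nonneg fun ω => by positivity

namespace IsNoisyBits

variable {μ : Measure Ω} {δ : ℝ} {W X : Ω → Fin d → Bool}

lemma crossover_nonneg (h : IsNoisyBits μ δ W X) : 0 ≤ (1 - δ) / 2 := by linarith [h.le_one]

lemma crossover_le_one (h : IsNoisyBits μ δ W X) : (1 - δ) / 2 ≤ 1 := by linarith [h.nonneg]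

variable [IsProbabilityMeasure μ]

lemma of_condDistrib (hδ0 : 0 ≤ δ) (hδ1 : δ ≤ 1) (hW : Measurable W) (hX : Measurable X)
    (hprior : μ.map W = Measure.pi fun _ => bern (1 / 2))
    (hsample : ∀ᵐ w ∂μ.map W,
      condDistrib X W μ w = Measure.pi fun j => bsc ((1 - δ) / 2) (w j)) :
    IsNoisyBits μ δ W X where
  nonneg := hδ0
  le_one := hδ1
  measurable_param := hW
  measurable_sample := hX
  real_preimage_param w := by
    have : IsProbabilityMeasure (bern (1 / 2)) := isProbabilityMeasure_bern (by simp) (by norm_num)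
    rw [← map_measureReal_apply hW (measurableSet_singleton w), hprior, pi_real_singleton]
    simp only [bern_half_real_singleton, Finset.prod_const, Finset.card_univ, Fintype.card_fin]
  hasCondPMF := by
    have : IsMarkovKernel (bsc ((1 - δ) / 2)) := isMarkovKernel_bsc (by linarith) (by linarith)
    simpa only [pi_real_singleton] using HasCondPMF.of_condDistrib hW hX hsample

lemma real_preimage_sample (h : IsNoisyBits μ δ W X) (x : Fin d → Bool) :
    μ.real (X ⁻¹' {x}) = (1 / 2) ^ d :=
  h.hasCondPMF.real_preimage_eq_of_uniform h.measurable_param h.real_preimage_param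
    (sum_prod_bsc_real h.crossover_nonneg h.crossover_le_one) x

lemma hasCondPMF_reverse (h : IsNoisyBits μ δ W X) :
    HasCondPMF μ X W fun x w => ∏ i, (bsc ((1 - δ) / 2) (x i)).real {w i} := by
  simpa only [bsc_real_comm h.crossover_nonneg h.crossover_le_one] using
    h.hasCondPMF.reverse_of_uniform h.measurable_param h.real_preimage_param
      (sum_prod_bsc_real h.crossover_nonneg h.crossover_le_one)

lemma entropy_param (h : IsNoisyBits μ δ W X) : entropy μ W = d * log 2 := by
  rw [entropy_eq_neg_log_of_uniform h.real_preimage_param, log_pow, one_div, log_inv]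
  ring

lemma entropy_sample (h : IsNoisyBits μ δ W X) : entropy μ X = d * log 2 := by
  rw [entropy_eq_neg_log_of_uniform h.real_preimage_sample, log_pow, one_div, log_inv]
  ring

variable [MeasurableSpace γ] [Finite γ] [MeasurableSingletonClass γ] {C : Ω → γ}

lemma mutualInfo_le_sq_mul (h : IsNoisyBits μ δ W X) (hC : Measurable C)
    (hCX : HasCondPMF μ (fun ω => (C ω, X ω)) W fun p w =>
      ∏ i, (bsc ((1 - δ) / 2) (p.2 i)).real {w i}) :
    mutualInfo μ W C ≤ δ ^ 2 * mutualInfo μ X C := by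
  rw [mutualInfo, mutualInfo, h.entropy_param, h.entropy_sample]
  exact hCX.log_two_sub_condEntropy_le_bsc_pi h.measurable_sample h.measurable_param hC h.nonneg
    h.le_one

lemma mutualInfo_comp_sample_le (h : IsNoisyBits μ δ W X) (q : (Fin d → Bool) → γ) :
    mutualInfo μ W (fun ω => q (X ω)) ≤ d * (log 2 - binEntropy ((1 - δ) / 2)) := by
  have hsample := h.hasCondPMF_reverse.condEntropy_bsc_pi h.measurable_sample h.measurable_param
    h.crossover_nonneg h.crossover_le_one
  have hcomp := condEntropy_le_condEntropy_comp (μ := μ) h.measurable_param h.measurable_sample q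
  rw [mutualInfo, h.entropy_param]
  linarith

lemma mutualInfo_comp_sample_le_log_card {γ : Type*} [MeasurableSpace γ] [Fintype γ]
    [MeasurableSingletonClass γ] (h : IsNoisyBits μ δ W X) (q : (Fin d → Bool) → γ) :
    mutualInfo μ W (fun ω => q (X ω)) ≤ δ ^ 2 * log (Fintype.card γ) := by
  have hq : Measurable fun ω => q (X ω) := Measurable.of_discrete.comp h.measurable_sample
  calc mutualInfo μ W (fun ω => q (X ω)) ≤ δ ^ 2 * mutualInfo μ X fun ω => q (X ω) :=
        h.mutualInfo_le_sq_mul hq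
          (h.hasCondPMF_reverse.comp_left h.measurable_sample (fun x => (q x, x)) fun _ _ => rfl)
    _ ≤ δ ^ 2 * log (Fintype.card γ) := by
        rw [mutualInfo_comm]
        gcongr
        exact mutualInfo_le_log_card hq h.measurable_sample

lemma mul_log_two_sub_binEntropy_le_mutualInfo (h : IsNoisyBits μ δ W X) (hC : Measurable C)
    (g : γ → Fin d → Bool) :
    d * (log 2 - binEntropy (bitErrorRate μ W fun ω => g (C ω))) ≤ mutualInfo μ W C := by
  rw [mutualInfo, h.entropy_param, mul_sub]
  exact sub_le_sub_left (condEntropy_le_binEntropy_bitError h.measurable_param hC g) _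

variable {υ : Type*} [MeasurableSpace υ] [Finite υ] [MeasurableSingletonClass υ]
  [MeasurableSpace β] [Finite β] [MeasurableSingletonClass β]
  {K : Kernel υ β} [IsMarkovKernel K] {T : ℕ} {V : ℕ → Ω → β}

lemma mutualInfo_past_le_capacity (h : IsNoisyBits μ δ W X) (hV : ∀ t, Measurable (V t))
    {φ : (t : ℕ) → (Fin d → Bool) → (Fin t → β) → υ}
    (hout : IsChannelOutput μ K T (fun t p => φ t p.2) (fun ω => (W ω, X ω)) V) :
    mutualInfo μ W (past V T) ≤ δ ^ 2 * (T * (capacity K * log 2)) := by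
  have hW := h.measurable_param
  have hX := h.measurable_sample
  have hVT := measurable_past hV T
  have hblock : HasCondPMF μ (fun ω => (X ω, W ω)) (past V T) fun p v =>
      ∏ i : Fin T, (K (φ i p.1 fun j => v (j.castLE i.is_lt.le))).real {v i} :=
    (hout.hasCondPMF_past le_rfl).comp_left (hW.prodMk hX) Prod.swap fun _ _ => rfl
  have hreverse : HasCondPMF μ (fun ω => (past V T ω, X ω)) W fun p w =>
      ∏ i, (bsc ((1 - δ) / 2) (p.2 i)).real {w i} :=
    (h.hasCondPMF_reverse.swap hX hW hblock (k := fun x v =>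
      ∏ i : Fin T, (K (φ i x fun j => v (j.castLE i.is_lt.le))).real {v i})).comp_left
      (hX.prodMk hVT) Prod.swap fun _ _ => rfl
  have hsample : IsChannelOutput μ K T φ X V :=
    hout.comp_left (hW.prodMk hX) hV Prod.snd fun _ _ _ => rfl
  calc mutualInfo μ W (past V T) ≤ δ ^ 2 * mutualInfo μ X (past V T) :=
        h.mutualInfo_le_sq_mul hVT hreverse
    _ ≤ δ ^ 2 * (T * (capacity K * log 2)) := by
        gcongr
        exact hsample.mutualInfo_past_le_capacity hX hV le_rfl

end IsNoisyBits

end Model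

section Bits

lemma one_sub_binEnt_mul_log_two (p : ℝ) : (1 - binEnt p) * log 2 = log 2 - binEntropy p := by
  rw [binEnt, binEntropy_eq_negMulLog_add_negMulLog_one_sub, sub_mul, one_mul,
    div_mul_cancel₀ _ log_two_pos.ne']

lemma binEnt_strictMonoOn : StrictMonoOn binEnt (Set.Icc 0 (1 / 2)) := by
  intro p hp q hq hpq
  have hlt := binEntropy_strictMonoOn (one_div (2 : ℝ) ▸ hp) (one_div (2 : ℝ) ▸ hq) hpq
  rw [← sub_lt_sub_iff_left (log 2), ← one_sub_binEnt_mul_log_two, ← one_sub_binEnt_mul_log_two,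
    mul_lt_mul_iff_left₀ log_two_pos] at hlt
  exact (sub_lt_sub_iff_left 1).1 hlt

lemma binEntInv_le {y e : ℝ} (he : 0 ≤ e) (hy : y ≤ binEnt e) : binEntInv y ≤ e := by
  refine Real.sSup_le (fun p ⟨hp, hpy⟩ => le_of_not_gt fun hep => ?_) he
  exact (hpy.trans hy).not_gt (binEnt_strictMonoOn ⟨he, hep.le.trans hp.2⟩ hp hep)

variable {υ : Type*} [MeasurableSpace Ω] {μ : Measure Ω} [IsProbabilityMeasure μ]
  [MeasurableSpace υ] [Finite υ] [MeasurableSingletonClass υ]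
  [MeasurableSpace β] [Finite β] [MeasurableSingletonClass β]
  {K : Kernel υ β} [IsMarkovKernel K] {d b T : ℕ} {δ η : ℝ} {W X : Ω → Fin d → Bool}
  {V : ℕ → Ω → β}

lemma IsNoisyBits.one_sub_binEnt_bitErrorRate_le (h : IsNoisyBits μ δ W X) (hd : 0 < d)
    (hV : ∀ t, Measurable (V t)) {q : (Fin d → Bool) → Fin (2 ^ b)}
    {φ : (t : ℕ) → Fin (2 ^ b) → (Fin t → β) → υ}
    (hout : IsChannelOutput μ K T (fun t p => φ t (q p.2)) (fun ω => (W ω, X ω)) V)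
    (hη0 : 0 ≤ η) (hη : mutualInfo μ W (past V T) ≤ η * mutualInfo μ W fun ω => q (X ω))
    (ψ : (Fin T → β) → Fin d → Bool) :
    1 - binEnt (bitErrorRate μ W fun ω => ψ (past V T ω)) ≤
      1 / d * min (d * (1 - binEnt ((1 - δ) / 2)) * η)
        (min (δ ^ 2 * b * η) (δ ^ 2 * capacity K * T)) := by
  have hd' : (0 : ℝ) < d := mod_cast hd
  have hfano := h.mul_log_two_sub_binEntropy_le_mutualInfo (measurable_past hV T) ψ
  have hsample := hη.trans (mul_le_mul_of_nonneg_left (h.mutualInfo_comp_sample_le q) hη0)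
  have hrate := hη.trans (mul_le_mul_of_nonneg_left (h.mutualInfo_comp_sample_le_log_card q) hη0)
  have hcapacity := h.mutualInfo_past_le_capacity hV (φ := fun t x => φ t (q x)) hout
  rw [Fintype.card_fin, Nat.cast_pow, Nat.cast_ofNat, log_pow] at hrate
  rw [← one_sub_binEnt_mul_log_two] at hfano hsample
  rw [one_div, ← div_eq_inv_mul, le_div_iff₀' hd']
  refine le_min ?_ (le_min ?_ ?_) <;> refine le_of_mul_le_mul_right ?_ log_two_pos <;> linarith

lemma div_le_div_of_one_sub_binEnt_le {e p : ℝ} (hd : 0 < d) (he0 : 0 ≤ e) (hep : e ≤ p)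
    (hp : p ≤ 1 / 2) (hη0 : 0 ≤ η) (h : 1 - binEnt e ≤ 1 / d * (δ ^ 2 * b * η)) :
    (1 - binEnt p) / (δ ^ 2 * η) ≤ b / d := by
  have hmono : binEnt e ≤ binEnt p :=
    binEnt_strictMonoOn.monotoneOn ⟨he0, hep.trans hp⟩ ⟨he0.trans hep, hp⟩ hep
  refine div_le_of_le_mul₀ (by positivity) (by positivity) ?_
  calc 1 - binEnt p ≤ 1 - binEnt e := sub_le_sub_left hmono 1
    _ ≤ 1 / d * (δ ^ 2 * b * η) := h
    _ = b / d * (δ ^ 2 * η) := by ring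

end Bits

/-- Corollary 6. In the setting of Corollary 5 with average bit-error
distortion `ℓ(w, ŵ) = (1/d) Σ_j 1{w_j ≠ ŵ_j}`, every protocol (quantizer, encoder, estimator)
satisfies `E[ℓ(W, Ŵ)] ≥ h₂⁻¹(1 − (1/d) min{d(1 − h₂((1−δ)/2)) η_T, δ² b η_T, δ² C T})`
(provided the argument of `h₂⁻¹` lies in `[0,1]`), hence the same bound holds for the Bayes
risk; moreover, achieving average bit-error probability at most `p ∈ [0, 1/2]` forces
`b/d ≥ (1 − h₂(p))/(δ² η_T)` with `η_T = 1 − (1 − η(K))^T`. -/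
theorem discrete_param_bayes_risk_and_rate_bounds
    {Ω U' V' : Type*} [MeasurableSpace Ω]
    [MeasurableSpace U'] [Fintype U'] [MeasurableSingletonClass U'] [Nonempty U']
    [MeasurableSpace V'] [Fintype V'] [MeasurableSingletonClass V'] [Nonempty V']
    (μ : Measure Ω) [IsProbabilityMeasure μ]
    (K : Kernel U' V') [IsMarkovKernel K]
    (d b T : ℕ) (hd : 0 < d) (δ : ℝ) (hδ0 : 0 ≤ δ) (hδ1 : δ ≤ 1)
    (W X : Ω → Fin d → Bool) (U : ℕ → Ω → U') (V : ℕ → Ω → V')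
    (hW : Measurable W) (hX : Measurable X)
    (hU : ∀ t, Measurable (U t)) (hV : ∀ t, Measurable (V t))
    (hPrior : μ.map W = Measure.pi fun _ : Fin d => bern (1 / 2))
    (hSample : ∀ᵐ w ∂(μ.map W),
      condDistrib X W μ w = Measure.pi fun j : Fin d => bsc ((1 - δ) / 2) (w j))
    (φQ : (Fin d → Bool) → Fin (2 ^ b))
    (φE : (t : ℕ) → Fin (2 ^ b) → (Fin t → V') → U')
    (hEnc : ∀ t, t < T → ∀ ω, U t ω = φE t (φQ (X ω)) fun s : Fin t => V s ω)
    (hChannel : ∀ t, t < T →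
      ∀ᵐ p ∂(μ.map fun ω => ((W ω, X ω, fun s : Fin t => V s ω), U t ω)),
        condDistrib (V t) (fun ω => ((W ω, X ω, fun s : Fin t => V s ω), U t ω)) μ p = K p.2)
    (ψ : (Fin T → V') → Fin d → Bool) :
    (∀ ηT : ℝ,
      (ηT = 1 - (1 - (etaMax K).toReal) ^ T ∨
        ((∀ t y v v', φE t y v = φE t y v') ∧ ηT = (etaMax (kernelPi T K)).toReal)) →
      0 ≤ 1 - (1 / (d : ℝ)) * min ((d : ℝ) * (1 - binEnt ((1 - δ) / 2)) * ηT)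
            (min (δ ^ 2 * b * ηT) (δ ^ 2 * capacity K * T)) →
      1 - (1 / (d : ℝ)) * min ((d : ℝ) * (1 - binEnt ((1 - δ) / 2)) * ηT)
            (min (δ ^ 2 * b * ηT) (δ ^ 2 * capacity K * T)) ≤ 1 →
      binEntInv (1 - (1 / (d : ℝ)) * min ((d : ℝ) * (1 - binEnt ((1 - δ) / 2)) * ηT)
            (min (δ ^ 2 * b * ηT) (δ ^ 2 * capacity K * T))) ≤
        ∫ ω, ((Finset.univ.filter fun j : Fin d =>
            W ω j ≠ ψ (fun t : Fin T => V t ω) j).card : ℝ) / d ∂μ) ∧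
    (∀ p : ℝ, 0 ≤ p → p ≤ 1 / 2 →
      (∫ ω, ((Finset.univ.filter fun j : Fin d =>
          W ω j ≠ ψ (fun t : Fin T => V t ω) j).card : ℝ) / d ∂μ) ≤ p →
      (1 - binEnt p) / (δ ^ 2 * (1 - (1 - (etaMax K).toReal) ^ T)) ≤ (b : ℝ) / d) := by
  have hmodel := IsNoisyBits.of_condDistrib hδ0 hδ1 hW hX hPrior hSample
  have hY : Measurable fun ω => φQ (X ω) := Measurable.of_discrete.comp hX
  have hout : IsChannelOutput μ K T (fun t p => φE t (φQ p.2)) (fun ω => (W ω, X ω)) V :=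
    .of_condDistrib hW hX hU hV hEnc hChannel
  have hmessage : IsChannelOutput μ K T (fun t p => φE t p.2) (fun ω => (W ω, φQ (X ω))) V :=
    hout.comp_left (hW.prodMk hX) hV (Prod.map id φQ) fun _ _ _ => rfl
  have hη0 := one_sub_pow_etaMax_nonneg K T
  have hfeedback := hmodel.one_sub_binEnt_bitErrorRate_le hd hV hout hη0
    (hmessage.mutualInfo_past_le_etaMax hW hY hV le_rfl) ψ
  refine ⟨fun ηT hηT _ _ => binEntInv_le (bitErrorRate_nonneg μ W _) (sub_le_comm.1 ?_),
    fun p _ hp hrisk => ?_⟩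
  · rcases hηT with rfl | ⟨hconst, rfl⟩
    · exact hfeedback
    · let u (t : ℕ) (y : Fin (2 ^ b)) : U' := φE t y (Classical.arbitrary _)
      have hblock : IsChannelOutput μ K T (fun t p _ => u t p.2) (fun ω => (W ω, φQ (X ω))) V :=
        hmessage.comp_left (hW.prodMk hY) hV id fun t p v => hconst t p.2 v _
      exact hmodel.one_sub_binEnt_bitErrorRate_le hd hV hout ENNReal.toReal_nonneg
        (hblock.mutualInfo_past_le_etaMax_kernelPi (u := u) hW hY hV) ψ
  · refine div_le_div_of_one_sub_binEnt_le hd (bitErrorRate_nonneg μ W _) hrisk hp hη0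
      (hfeedback.trans ?_)
    gcongr
    exact (min_le_right _ _).trans (min_le_left _ _)

end DecEst
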